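/- arXiv:2507.21487 — 2 statements merged into one kernel-verified Lean document; each statement's English description precedes it below -/
import Mathlib

section
/- Let k ≥ 3 and h : ZMod k → ℕ with 2 ≤ h v ≤ 4 for every v. The Latvian game on the cycle C_k is winnable if and only if at least one of the following holds: (i) k = 3 and h v = 2 for some vertex v; (ii) (k = 4 or 3 divides k) and h v ≤ 3 for every v; (iii) there exist two distinct vertices v ≠ w with h v = 2 and h w = 2; (iv) there exists i with h (i−1) = 3, h i = 2, h (i+1) = 3; (v) there exists i with h i = 2, h (i+1) = 3, h (i+2) = 3, or there exists i with h i = 3, h (i+1) = 3, h (i+2) = 2. -/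
/-- A Czech hat game on the digraph with adjacency `D` (sage `v` sees sage `u`
iff `D v u`), guessness `g`, and hatness `h`, is winnable: there is a strategy
assigning to each sage `v` a set of `g v` guesses, depending only on the hats
she sees, such that for every coloring some sage guesses her own hat color. -/
def HatGame.Winnable {V : Type*} (D : V → V → Prop) (g h : V → ℕ) : Prop :=
  ∃ F : ∀ v : V, (∀ u : V, Fin (h u)) → Finset (Fin (h v)),
    (∀ (v : V) (c c' : ∀ u : V, Fin (h u)),
        (∀ u : V, D v u → c u = c' u) → F v c = F v c') ∧
    (∀ (v : V) (c : ∀ u : V, Fin (h u)), (F v c).card = g v) ∧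
    (∀ c : ∀ u : V, Fin (h u), ∃ v : V, c v ∈ F v c)

namespace HatGame

/-- The strategy `f` wins the Latvian game with hatness `h` on the cycle of length `k`, where sage
`v` guesses `f v x z` on seeing color `x` on sage `v - 1` and color `z` on sage `v + 1`. -/
def CycleWins (k : ℕ) (h : ZMod k → ℕ) (f : ZMod k → ℕ → ℕ → ℕ) : Prop :=
  ∀ c : ZMod k → ℕ, (∀ v, c v < h v) → ∃ v, c v = f v (c (v - 1)) (c (v + 1))

theorem winnable_iff_exists_cycleWins (k : ℕ) (h : ZMod k → ℕ) (hh : ∀ v, 0 < h v) :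
    Winnable (fun i j : ZMod k => j = i + 1 ∨ j = i - 1) (fun _ => 1) h ↔
      ∃ f, CycleWins k h f := by
  classical
  constructor
  · rintro ⟨F, hF, hcard, hwin⟩
    have hsing : ∀ v c, ∃ e, F v c = {e} := fun v c => Finset.card_eq_one.1 (hcard v c)
    choose e he using hsing
    refine ⟨fun v x z => if hc : ∃ c : ∀ u : ZMod k, Fin (h u),
      (c (v - 1) : ℕ) = x ∧ (c (v + 1) : ℕ) = z then e v hc.choose else 0, fun c hc => ?_⟩
    obtain ⟨v, hv⟩ := hwin fun u => ⟨c u, hc u⟩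
    refine ⟨v, ?_⟩
    have hex : ∃ c' : ∀ u : ZMod k, Fin (h u),
      (c' (v - 1) : ℕ) = c (v - 1) ∧ (c' (v + 1) : ℕ) = c (v + 1) :=
      ⟨fun u => ⟨c u, hc u⟩, rfl, rfl⟩
    simp only [dif_pos hex]
    have h1 := hF v (fun u => ⟨c u, hc u⟩) hex.choose (by
      rintro u (rfl | rfl)
      · exact Fin.ext hex.choose_spec.2.symm
      · exact Fin.ext hex.choose_spec.1.symm)
    rw [h1, he, Finset.mem_singleton] at hv
    rw [← hv]
  · rintro ⟨f, hf⟩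
    refine ⟨fun v c => {⟨min (f v (c (v - 1)) (c (v + 1))) (h v - 1), by have := hh v; omega⟩},
      ?_, ?_, ?_⟩
    · intro v c c' hcc
      simp only [hcc (v - 1) (Or.inr rfl), hcc (v + 1) (Or.inl rfl)]
    · intro v c
      simp
    · intro c
      obtain ⟨v, hv⟩ := hf (fun u => c u) fun u => (c u).2
      refine ⟨v, Finset.mem_singleton.2 (Fin.ext ?_)⟩
      have := (c v).2
      simp only at hv ⊢
      omega

theorem CycleWins.mono {k : ℕ} {h h' : ZMod k → ℕ} {f : ZMod k → ℕ → ℕ → ℕ}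
    (hf : CycleWins k h' f) (hle : ∀ v, h v ≤ h' v) : CycleWins k h f :=
  fun c hc => hf c fun v => (hc v).trans_le (hle v)

theorem CycleWins.rotate {k : ℕ} {h : ZMod k → ℕ} {f : ZMod k → ℕ → ℕ → ℕ}
    (hf : CycleWins k h f) (s : ZMod k) :
    CycleWins k (fun v => h (v + s)) fun v => f (v + s) := by
  intro c hc
  obtain ⟨v, hv⟩ := hf (fun v => c (v - s)) fun v => by simpa using hc (v - s)
  refine ⟨v - s, ?_⟩
  rw [show v - s - 1 = v - 1 - s by ring, show v - s + 1 = v + 1 - s by ring]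
  simpa using hv

theorem CycleWins.reflect {k : ℕ} {h : ZMod k → ℕ} {f : ZMod k → ℕ → ℕ → ℕ}
    (hf : CycleWins k h f) : CycleWins k (fun v => h (-v)) fun v x z => f (-v) z x := by
  intro c hc
  obtain ⟨v, hv⟩ := hf (fun v => c (-v)) fun v => by simpa using hc (-v)
  refine ⟨-v, ?_⟩
  rw [show -v - 1 = -(v + 1) by ring, show -v + 1 = -(v - 1) by ring]
  simpa only [neg_neg] using hv

theorem exists_cycleWins_of_rotate {k : ℕ} {h : ZMod k → ℕ} (s : ZMod k)
    (hf : ∃ f, CycleWins k (fun v => h (v + s)) f) : ∃ f, CycleWins k h f := by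
  obtain ⟨f, hf⟩ := hf
  refine ⟨_, (hf.rotate (-s)).mono fun v => by simp⟩

theorem exists_cycleWins_of_reflect {k : ℕ} {h : ZMod k → ℕ}
    (hf : ∃ f, CycleWins k (fun v => h (-v)) f) : ∃ f, CycleWins k h f := by
  obtain ⟨f, hf⟩ := hf
  refine ⟨_, hf.reflect.mono fun v => by simp⟩

/-- A strategy given by the positions `0, 1, …, k - 1` wins if it cannot be defeated by a
`k`-periodic sequence of colors. -/
theorem exists_cycleWins_of_nat {k : ℕ} [NeZero k] {h : ZMod k → ℕ} (g : ℕ → ℕ → ℕ → ℕ)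
    (hg : ∀ u : ℕ → ℕ, (∀ i, u (i + k) = u i) → (∀ i, u i < h i) →
      u 0 ≠ g 0 (u (k - 1)) (u 1) →
      (∀ i, i + 1 < k → u (i + 1) ≠ g (i + 1) (u i) (u (i + 2))) → False) :
    ∃ f, CycleWins k h f := by
  refine ⟨fun v => g v.val, fun c hc => ?_⟩
  by_contra! hne
  refine hg (fun i => c i) (by simp) (fun i => hc i) ?_ fun i hi => ?_
  · have h0 := hne 0
    have h1 : ((k - 1 : ℕ) : ZMod k) = 0 - 1 := by
      rw [Nat.cast_sub NeZero.one_le]; simp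
    rw [ZMod.val_zero] at h0
    simpa [h1] using h0
  · have h0 := hne ((i + 1 : ℕ) : ZMod k)
    rw [ZMod.val_cast_of_lt hi] at h0
    have h1 : ((i + 1 : ℕ) : ZMod k) - 1 = i := by push_cast; ring
    have h2 : ((i + 1 : ℕ) : ZMod k) + 1 = (i + 2 : ℕ) := by push_cast; ring
    rwa [h1, h2] at h0

/-- Conversely, a winning strategy cannot be defeated by a sequence of colors closing up after `k`
steps. -/
theorem CycleWins.nat {k : ℕ} [NeZero k] {h : ZMod k → ℕ} {f : ZMod k → ℕ → ℕ → ℕ}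
    (hf : CycleWins k h f) (u : ℕ → ℕ) (hk : u k = u 0) (hu : ∀ i < k, u i < h i)
    (hne : ∀ i, i + 1 < k → u (i + 1) ≠ f ((i + 1 : ℕ) : ZMod k) (u i) (u (i + 2))) :
    u 0 = f 0 (u (k - 1)) (u 1) := by
  have hsucc : ∀ i < k, u ((i + 1 : ℕ) : ZMod k).val = u (i + 1) := by
    intro i hi
    rcases Nat.lt_or_ge (i + 1) k with h1 | h1
    · rw [ZMod.val_cast_of_lt h1]
    · obtain rfl : k = i + 1 := by omega
      rw [hk, ZMod.natCast_self, ZMod.val_zero]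
  have hpred : ((k - 1 : ℕ) : ZMod k) = -1 := by
    rw [Nat.cast_sub NeZero.one_le]; simp
  obtain ⟨v, hv⟩ := hf (fun v => u v.val) fun v => by
    have := hu v.val v.val_lt
    rwa [ZMod.natCast_zmod_val] at this
  obtain ⟨i, hi, rfl⟩ : ∃ i < k, ((i : ℕ) : ZMod k) = v :=
    ⟨v.val, v.val_lt, ZMod.natCast_zmod_val v⟩
  have hlast : k - 1 < k := Nat.sub_lt (NeZero.pos k) one_pos
  have hs := hsucc i hi
  push_cast at hs
  simp only [hs, ZMod.val_cast_of_lt hi] at hv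
  cases i with
  | zero =>
    rw [Nat.cast_zero, zero_sub, ← hpred, ZMod.val_cast_of_lt hlast] at hv
    exact hv
  | succ i =>
    refine absurd ?_ (hne i hi)
    rw [show ((i + 1 : ℕ) : ZMod k) - 1 = i by push_cast; ring,
      ZMod.val_cast_of_lt (by omega)] at hv
    exact hv

/-- The entry in row `x` and column `z` of a table. -/
def entry (t : List (List ℕ)) (x z : ℕ) : ℕ := (t.getD x []).getD z 0

theorem exists_cycleWins_three {h : ZMod 3 → ℕ} (hh : ∀ v, h v ≤ 4) (h0 : h 0 = 2) :
    ∃ f, CycleWins 3 h f := by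
  have key : ∀ a < 2, ∀ b < 4, ∀ c < 4,
      a = entry [[1, 0, 1, 0], [0, 0, 1, 1], [0, 1, 0, 1], [1, 1, 0, 0]] c b ∨
      b = entry [[2, 3, 1, 0], [3, 1, 0, 2]] a c ∨
      c = entry [[0, 1], [3, 0], [1, 2], [2, 3]] b a := by decide
  refine exists_cycleWins_of_nat (fun i => entry (match i with
    | 0 => [[1, 0, 1, 0], [0, 0, 1, 1], [0, 1, 0, 1], [1, 1, 0, 0]]
    | 1 => [[2, 3, 1, 0], [3, 1, 0, 2]]
    | _ => [[0, 1], [3, 0], [1, 2], [2, 3]])) fun u hper hu hu0 hne => ?_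
  have hu' : ∀ i, u i < 4 := fun i => (hu i).trans_le (hh _)
  have h3 := hper 0
  have h1 := hne 0 (by norm_num)
  have h2 := hne 1 (by norm_num)
  simp only [zero_add, Nat.reduceAdd, Nat.reduceSub] at h1 h2 h3 hu0
  rw [h3] at h2
  rcases key (u 0) (by simpa [h0] using hu 0) (u 1) (hu' 1) (u 2) (hu' 2) with h | h | h
  exacts [hu0 h, h1 h, h2 h]

set_option synthInstance.maxHeartbeats 200000 in
set_option synthInstance.maxSize 1024 in
theorem exists_cycleWins_four {h : ZMod 4 → ℕ} (hh : ∀ v, h v ≤ 3) :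
    ∃ f, CycleWins 4 h f := by
  have key : ∀ a < 3, ∀ b < 3, ∀ c < 3, ∀ d < 3,
      a = entry [[2, 2, 0], [0, 2, 1], [1, 0, 1]] d b ∨
      b = entry [[0, 2, 1], [1, 0, 1], [2, 2, 0]] a c ∨
      c = entry [[2, 0, 1], [0, 1, 1], [2, 2, 0]] b d ∨
      d = entry [[1, 0, 2], [0, 0, 1], [2, 1, 2]] c a := by decide
  refine exists_cycleWins_of_nat (fun i => entry (match i with
    | 0 => [[2, 2, 0], [0, 2, 1], [1, 0, 1]]
    | 1 => [[0, 2, 1], [1, 0, 1], [2, 2, 0]]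
    | 2 => [[2, 0, 1], [0, 1, 1], [2, 2, 0]]
    | _ => [[1, 0, 2], [0, 0, 1], [2, 1, 2]])) fun u hper hu hu0 hne => ?_
  have hu' : ∀ i, u i < 3 := fun i => (hu i).trans_le (hh _)
  have h4 := hper 0
  have h1 := hne 0 (by norm_num)
  have h2 := hne 1 (by norm_num)
  have h3 := hne 2 (by norm_num)
  simp only [zero_add, Nat.reduceAdd, Nat.reduceSub] at h1 h2 h3 h4 hu0
  rw [h4] at h3
  rcases key (u 0) (hu' 0) (u 1) (hu' 1) (u 2) (hu' 2) (u 3) (hu' 3) with h | h | h | h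
  exacts [hu0 h, h1 h, h2 h, h3 h]

/-- If all sages guess wrong, then the sequence of colors, twisted so as to drop by `1` in every
period, has constant differences modulo `3`. -/
theorem exists_cycleWins_of_three_dvd {k : ℕ} (hk : 3 ≤ k) (hdvd : 3 ∣ k) {h : ZMod k → ℕ}
    (hh : ∀ v, h v ≤ 3) : ∃ f, CycleWins k h f := by
  have : NeZero k := ⟨by omega⟩
  let φ : ℕ → ℕ → ℕ := fun x z => if z % 3 = x % 3 then (x + 2) % 3 else x % 3
  refine exists_cycleWins_of_nat (fun i x z => if i = 0 then φ (x + 1) z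
    else if i + 1 = k then φ x (z + 2) else φ x z) fun u hper hu hu0 hne => ?_
  have hu' : ∀ i, u i < 3 := fun i => (hu i).trans_le (hh _)
  -- the differences `d i = u (i + 1) - u i` up to the last one
  have step : ∀ i, i + 2 < k → u (i + 1) ≠ φ (u i) (u (i + 2)) := fun i hi => by
    have := hne i (by omega)
    rwa [if_neg (by omega), if_neg (by omega)] at this
  have hlast : u (k - 1) ≠ φ (u (k - 2)) (u 0 + 2) := by
    have := hne (k - 2) (by omega)
    rw [if_neg (by omega), if_pos (by omega), show k - 2 + 1 = k - 1 by omega,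
      show k - 2 + 2 = 0 + k by omega, hper] at this
    exact this
  have hfirst : u 0 ≠ φ (u (k - 1) + 1) (u 1) := by simpa using hu0
  let d : ℕ → ℕ := fun i => if i + 1 = k then (u 0 + 2 + 2 * u i) % 3 else (u (i + 1) + 2 * u i) % 3
  have hd : ∀ i, d i < 3 := fun i => by simp only [d]; split_ifs <;> omega
  have hstep : ∀ i, i + 1 < k → (d i = 0 → d (i + 1) = 0) ∧ (d i = 2 → d (i + 1) ≠ 1) := by
    intro i hi
    have h0 := hu' i
    have h1 := hu' (i + 1)
    rcases Nat.lt_or_ge (i + 2) k with h2 | h2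
    · have := step i h2
      have h3 := hu' (i + 2)
      simp only [d, φ, if_neg hi.ne, if_neg (show ¬ i + 1 + 1 = k by omega), add_assoc, Nat.reduceAdd] at this ⊢
      split_ifs at this <;> omega
    · have hik : k - 2 = i := by omega
      have hik' : k - 1 = i + 1 := by omega
      have := hlast
      have h3 := hu' 0
      rw [hik, hik'] at this
      simp only [d, φ, if_neg hi.ne, if_pos (show i + 1 + 1 = k by omega)] at this ⊢
      split_ifs at this <;> omega
  have hwrap : (d (k - 1) = 0 → d 0 = 0) ∧ (d (k - 1) = 2 → d 0 ≠ 1) := by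
    have h0 := hu' 0
    have h1 := hu' (k - 1)
    have h3 := hu' 1
    simp only [d, φ, if_pos (show k - 1 + 1 = k by omega), if_neg (show ¬ 0 + 1 = k by omega),
      zero_add] at hfirst ⊢
    split_ifs at hfirst <;> omega
  have hzero : ∀ i, d i = 0 → ∀ j, i + j < k → d (i + j) = 0 := by
    intro i hi j
    induction j with
    | zero => exact fun _ => hi
    | succ j ih => exact fun hj => (hstep (i + j) (by omega)).1 (ih (by omega))
  have hconst : ∀ i < k, d i = d 0 := by
    by_cases hex : ∃ i < k, d i = 0
    · obtain ⟨i, hi, hdi⟩ := hex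
      have h1 := hzero i hdi (k - 1 - i) (by omega)
      rw [show i + (k - 1 - i) = k - 1 by omega] at h1
      have h2 := hwrap.1 h1
      intro j hj
      rw [h2]
      simpa using hzero 0 h2 j (by omega)
    · push Not at hex
      have hmono : ∀ i, d i = 2 → ∀ j, i + j < k → d (i + j) = 2 := by
        intro i hi j
        induction j with
        | zero => exact fun _ => hi
        | succ j ih =>
          intro hj
          have h1 := (hstep (i + j) (by omega)).2 (ih (by omega))
          have h2 := hex (i + j + 1) (by omega)
          have h3 := hd (i + j + 1)
          rw [← add_assoc]
          omega
      by_cases hex2 : ∃ i < k, d i = 2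
      · obtain ⟨i, hi, hdi⟩ := hex2
        have h1 := hmono i hdi (k - 1 - i) (by omega)
        rw [show i + (k - 1 - i) = k - 1 by omega] at h1
        have h2 := hwrap.2 h1
        have h3 := hex 0 (by omega)
        have h4 := hd 0
        have h5 : d 0 = 2 := by omega
        intro j hj
        rw [h5]
        simpa using hmono 0 h5 j (by omega)
      · push Not at hex2
        intro j hj
        have h1 := hex j hj
        have h2 := hex2 j hj
        have h3 := hd j
        have h4 := hex 0 (by omega)
        have h5 := hex2 0 (by omega)
        have h6 := hd 0
        omega
  have hsum : ∀ i, i < k → u i % 3 = (u 0 + i * d 0) % 3 := by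
    intro i
    induction i with
    | zero => simp
    | succ i ih =>
      intro hi
      have h1 := ih (by omega)
      have h2 := hconst i (by omega)
      have h3 : d i = (u (i + 1) + 2 * u i) % 3 := by simp only [d, if_neg hi.ne]
      rw [Nat.add_mul, one_mul]
      omega
  have h1 := hsum (k - 1) (by omega)
  have h2 := hconst (k - 1) (by omega)
  have h3 : d (k - 1) = (u 0 + 2 + 2 * u (k - 1)) % 3 := by
    simp only [d, if_pos (show k - 1 + 1 = k by omega)]
  obtain ⟨m, rfl⟩ := hdvd
  have h4 : (3 * m - 1) * d 0 + d 0 = 3 * (m * d 0) := by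
    rw [← Nat.succ_mul, Nat.succ_eq_add_one, Nat.sub_add_cancel (by omega), mul_assoc]
  omega

/-- Along a chain of sages with four colors `P i + 2 * Q i`, all guessing wrong, a mismatch
between neighboring bits propagates. -/
theorem mismatch_propagates (P Q : ℕ → ℕ) (n : ℕ) (hP : ∀ i, P (i + 1) < 2) (hQ : ∀ i, Q i < 2)
    (hne : ∀ i < n, P (i + 1) + 2 * Q (i + 1) ≠ (1 - Q i) + 2 * P (i + 2)) (h0 : Q 0 ≠ P 1) :
    Q n ≠ P (n + 1) := by
  induction n with
  | zero => exact h0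
  | succ n ih =>
    have h1 := ih fun i hi => hne i (by omega)
    have h2 := hne n (by omega)
    have h3 := hP n
    have h4 := hP (n + 1)
    have h5 := hQ n
    have h6 := hQ (n + 1)
    simp only [add_assoc, Nat.reduceAdd] at h4 ⊢
    omega

theorem exists_cycleWins_of_two_two {k : ℕ} (hk : 3 ≤ k) {h : ZMod k → ℕ} (hh : ∀ v, h v ≤ 4)
    (h0 : h 0 = 2) (m : ℕ) (hm : m + 1 < k) (hm2 : h (m + 1 : ℕ) = 2) :
    ∃ f, CycleWins k h f := by
  have : NeZero k := ⟨by omega⟩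
  refine exists_cycleWins_of_nat (fun i x z => if i = 0 then z % 2
    else if i ≤ m then (1 - if i = 1 then x else x / 2) + 2 * (z % 2)
    else 1 - if i = 1 then x else x / 2) fun u hper hu hu0 hne => ?_
  have hu' : ∀ i, u i < 4 := fun i => (hu i).trans_le (hh _)
  have h00 : u 0 < 2 := by simpa [h0] using hu 0
  have hmm : u (m + 1) < 2 := by simpa only [hm2] using hu (m + 1)
  have hmis := mismatch_propagates (fun i => u i % 2) (fun i => if i = 0 then u i else u i / 2) m
    (fun i => by omega)
    (fun i => by
      have := hu' i
      split_ifs with hi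
      · rwa [hi]
      · omega)
    (fun i hi => by
      have := hne i (by omega)
      have h4 := hu' (i + 1)
      simp only [if_neg (Nat.succ_ne_zero i), if_pos (show i + 1 ≤ m by omega),
        Nat.add_eq_right] at this ⊢
      split_ifs at this ⊢ <;> omega)
    (by simp only [if_true] at hu0 ⊢; exact hu0)
  have := hne m hm
  have h4 := hu' m
  simp only [if_neg (Nat.succ_ne_zero m), if_neg (show ¬ m + 1 ≤ m by omega),
    Nat.add_eq_right] at this hmis
  split_ifs at this hmis with hm0
  · subst hm0
    omega
  · omega

theorem exists_cycleWins_of_three_two_three {n : ℕ} {h : ZMod (n + 4) → ℕ} (hh : ∀ v, h v ≤ 4)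
    (h0 : h 0 = 2) (h1 : h 1 = 3) (h2 : h (-1) = 3) : ∃ f, CycleWins (n + 4) h f := by
  have key : ∀ (b : Fin 2) (c d : Fin 3) (p q : Fin 2),
      b.1 ≠ entry [[0, 0, 0], [1, 0, 1], [1, 0, 1]] d c → c.1 ≠ entry [[0, 2], [1, 1]] b p →
      d.1 ≠ entry [[2, 0], [1, 0]] q b → ¬ (c.1 / 2 ≠ p → q.1 ≠ d / 2) := by decide
  refine exists_cycleWins_of_nat (fun i x z =>
    if i = 0 then entry [[0, 0, 0], [1, 0, 1], [1, 0, 1]] x z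
    else if i = 1 then entry [[0, 2], [1, 1]] x (z % 2)
    else if i = n + 3 then entry [[2, 0], [1, 0]] (x / 2) z
    else (1 - x / 2) + 2 * (if i = n + 2 then z / 2 else z % 2)) fun u hper hu hu0 hne => ?_
  have hu' : ∀ i, u i < 4 := fun i => (hu i).trans_le (hh _)
  have h00 : u 0 < 2 := by simpa [h0] using hu 0
  have h11 : u 1 < 3 := by simpa [h1] using hu 1
  have h33 : u (n + 3) < 3 := by
    have := hu (n + 3)
    rwa [show ((n + 3 : ℕ) : ZMod (n + 4)) = ((n + 4 : ℕ) : ZMod (n + 4)) - 1 by push_cast; ring,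
      ZMod.natCast_self, zero_sub, h2] at this
  have hne1 := hne 0 (by omega)
  have hne3 := hne (n + 2) (by omega)
  have hlast : u (n + 2 + 2) = u 0 := by simpa using hper 0
  rw [hlast] at hne3
  simp only [zero_add, one_ne_zero, if_false, if_true] at hne1
  simp only [Nat.add_eq_zero_iff, OfNat.ofNat_ne_zero, and_false, if_false,
    add_assoc, Nat.reduceAdd, if_true, Nat.reduceEqDiff] at hne3
  refine key ⟨u 0, h00⟩ ⟨u 1, h11⟩ ⟨u (n + 3), h33⟩ ⟨u 2 % 2, by omega⟩
    ⟨u (n + 2) / 2, by have := hu' (n + 2); omega⟩ hu0 hne1 hne3 fun hmis => ?_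
  have := mismatch_propagates (fun i => if i = n + 2 then u (i + 1) / 2 else u (i + 1) % 2)
    (fun i => u (i + 1) / 2) (n + 1)
    (fun i => by
      have := hu' (i + 1 + 1)
      split_ifs <;> omega)
    (fun i => by
      have := hu' (i + 1)
      omega)
    (fun i hi => by
      have h3 := hne (i + 1) (by omega)
      have h4 := hu' (i + 2)
      simp only [if_neg (show ¬ i + 1 + 1 = 0 by omega), if_neg (show ¬ i + 1 + 1 = 1 by omega),
        if_neg (show ¬ i + 1 + 1 = n + 3 by omega), if_neg (show ¬ i + 1 = n + 2 by omega)] at h3 ⊢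
      split_ifs at h3 ⊢ <;> simp only [add_assoc, Nat.reduceAdd] at * <;> omega)
    (by simpa using hmis)
  simpa using this

theorem exists_cycleWins_of_three_three_two {n : ℕ} {h : ZMod (n + 4) → ℕ} (hh : ∀ v, h v ≤ 4)
    (h0 : h 0 = 2) (h1 : h (-1) = 3) (h2 : h (-2) = 3) : ∃ f, CycleWins (n + 4) h f := by
  have key : ∀ (b : Fin 2) (c d : Fin 3) (p q : Fin 2),
      b.1 ≠ entry [[0, 1], [1, 1], [0, 0]] c p → c.1 ≠ entry [[1, 2], [0, 0], [1, 2]] d b →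
      d.1 ≠ entry [[2, 1, 1], [0, 1, 1]] q c → ¬ (b.1 ≠ p → q.1 ≠ d / 2) := by decide
  refine exists_cycleWins_of_nat (fun i x z =>
    if i = 0 then entry [[0, 1], [1, 1], [0, 0]] x (z % 2)
    else if i = n + 3 then entry [[1, 2], [0, 0], [1, 2]] x z
    else if i = n + 2 then entry [[2, 1, 1], [0, 1, 1]] (x / 2) z
    else (1 - (if i = 1 then x else x / 2)) + 2 * (if i = n + 1 then z / 2 else z % 2))
    fun u hper hu hu0 hne => ?_
  have hu' : ∀ i, u i < 4 := fun i => (hu i).trans_le (hh _)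
  have h00 : u 0 < 2 := by simpa [h0] using hu 0
  have h33 : u (n + 3) < 3 := by
    have := hu (n + 3)
    rwa [show ((n + 3 : ℕ) : ZMod (n + 4)) = ((n + 4 : ℕ) : ZMod (n + 4)) - 1 by push_cast; ring,
      ZMod.natCast_self, zero_sub, h1] at this
  have h22 : u (n + 2) < 3 := by
    have := hu (n + 2)
    rwa [show ((n + 2 : ℕ) : ZMod (n + 4)) = ((n + 4 : ℕ) : ZMod (n + 4)) - 2 by push_cast; ring,
      ZMod.natCast_self, zero_sub, h2] at this
  have hne2 := hne (n + 1) (by omega)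
  have hne3 := hne (n + 2) (by omega)
  have hlast : u (n + 2 + 2) = u 0 := by simpa using hper 0
  rw [hlast] at hne3
  simp only [Nat.add_eq_zero_iff, OfNat.ofNat_ne_zero, and_false, if_false,
    add_assoc, Nat.reduceAdd, if_true, Nat.reduceEqDiff, Nat.add_left_cancel_iff] at hne2 hne3
  refine key ⟨u 0, h00⟩ ⟨u (n + 3), h33⟩ ⟨u (n + 2), h22⟩ ⟨u 1 % 2, by omega⟩
    ⟨u (n + 1) / 2, by have := hu' (n + 1); omega⟩ hu0 hne3 hne2 fun hmis => ?_
  have := mismatch_propagates (fun i => if i = n + 2 then u i / 2 else u i % 2)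
    (fun i => if i = 0 then u i else u i / 2) (n + 1)
    (fun i => by
      have := hu' (i + 1)
      split_ifs <;> omega)
    (fun i => by
      have := hu' i
      split_ifs with hi
      · rwa [hi]
      · omega)
    (fun i hi => by
      have h3 := hne i (by omega)
      have h4 := hu' (i + 1)
      simp only [if_neg (show ¬ i + 1 = 0 by omega), if_neg (show ¬ i + 1 = n + 2 by omega),
        if_neg (show ¬ i + 1 = n + 3 by omega)] at h3 ⊢
      split_ifs at h3 ⊢ <;> omega)
    (by simpa using hmis)
  simpa using this


/-- The hatnesses, all between `2` and `4`, for which the Latvian game on a cycle is winnable. -/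
def LowHatnessCondition (k : ℕ) (h : ZMod k → ℕ) : Prop :=
  (k = 3 ∧ ∃ v : ZMod k, h v = 2) ∨
    ((k = 4 ∨ 3 ∣ k) ∧ ∀ v : ZMod k, h v ≤ 3) ∨
    (∃ v w : ZMod k, v ≠ w ∧ h v = 2 ∧ h w = 2) ∨
    (∃ i : ZMod k, h (i - 1) = 3 ∧ h i = 2 ∧ h (i + 1) = 3) ∨
    (∃ i : ZMod k, h i = 2 ∧ h (i + 1) = 3 ∧ h (i + 2) = 3) ∨
    (∃ i : ZMod k, h i = 3 ∧ h (i + 1) = 3 ∧ h (i + 2) = 2)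

theorem LowHatnessCondition.exists_cycleWins {k : ℕ} (hk : 3 ≤ k) {h : ZMod k → ℕ}
    (hh : ∀ v, h v ≤ 4) (hcond : LowHatnessCondition k h) : ∃ f, CycleWins k h f := by
  have : NeZero k := ⟨by omega⟩
  have hthree : k = 3 → ∀ v, h v = 2 → ∃ f, CycleWins k h f := by
    rintro rfl v hv
    exact exists_cycleWins_of_rotate v
      (exists_cycleWins_three (fun _ => hh _) (by simpa using hv))
  rcases hcond with ⟨hk3, v, hv⟩ | ⟨rfl | hdvd, h3⟩ | ⟨v, w, hvw, hv, hw⟩ | ⟨i, h1, h2, h3⟩ |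
    ⟨i, h1, h2, h3⟩ | ⟨i, h1, h2, h3⟩
  · exact hthree hk3 v hv
  · exact exists_cycleWins_four h3
  · exact exists_cycleWins_of_three_dvd hk hdvd h3
  · refine exists_cycleWins_of_rotate v ?_
    have hpos : (w - v).val ≠ 0 := by
      rw [Ne, ZMod.val_eq_zero, sub_eq_zero]
      exact hvw.symm
    obtain ⟨m, hm⟩ := Nat.exists_eq_succ_of_ne_zero hpos
    have hlt := (w - v).val_lt
    refine exists_cycleWins_of_two_two hk (fun _ => hh _) (by simpa using hv) m (by omega) ?_
    rw [← Nat.succ_eq_add_one, ← hm, ZMod.natCast_zmod_val, sub_add_cancel, hw]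
  · rcases hk.eq_or_lt with hk3 | hk4
    · exact hthree hk3.symm i h2
    obtain ⟨n, rfl⟩ := Nat.exists_eq_add_of_le' hk4
    refine exists_cycleWins_of_rotate i (exists_cycleWins_of_three_two_three (fun _ => hh _) ?_ ?_ ?_)
    · simpa using h2
    · rwa [add_comm]
    · rwa [neg_add_eq_sub]
  · rcases hk.eq_or_lt with hk3 | hk4
    · exact hthree hk3.symm i h1
    obtain ⟨n, rfl⟩ := Nat.exists_eq_add_of_le' hk4
    refine exists_cycleWins_of_rotate i (exists_cycleWins_of_reflect
      (exists_cycleWins_of_three_three_two (fun _ => hh _) ?_ ?_ ?_))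
    · simpa using h1
    · rwa [neg_neg, add_comm]
    · rwa [neg_neg, add_comm]
  · rcases hk.eq_or_lt with hk3 | hk4
    · exact hthree hk3.symm _ h3
    obtain ⟨n, rfl⟩ := Nat.exists_eq_add_of_le' hk4
    refine exists_cycleWins_of_rotate (i + 2)
      (exists_cycleWins_of_three_three_two (fun _ => hh _) ?_ ?_ ?_)
    · rwa [zero_add]
    · rwa [show -1 + (i + 2) = i + 1 by ring]
    · rwa [show -2 + (i + 2) = i by ring]

/-- Sages `1, …, n` on a path have colors below `H` and all guess wrong according to `F`, for some
coloring of the vertices `0, …, n + 1` starting with `a, b` and ending with `y, z`. -/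
def WrongPath (F : ℕ → ℕ → ℕ → ℕ) (H : ℕ → ℕ) (n a b y z : ℕ) : Prop :=
  ∃ u : ℕ → ℕ, u 0 = a ∧ u 1 = b ∧ u n = y ∧ u (n + 1) = z ∧
    ∀ i < n, u (i + 1) < H (i + 1) ∧ u (i + 1) ≠ F (i + 1) (u i) (u (i + 2))

theorem CycleWins.eq_of_wrongPath {n : ℕ} {h : ZMod (n + 1) → ℕ} {f : ZMod (n + 1) → ℕ → ℕ → ℕ}
    (hf : CycleWins (n + 1) h f) {H : ℕ → ℕ} (hH : ∀ i < n, H (i + 1) ≤ h (i + 1 : ℕ))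
    {a b y : ℕ} (ha : a < h 0) (hp : WrongPath (fun i => f i) H n a b y a) : f 0 y b = a := by
  obtain ⟨u, h0, rfl, rfl, h1, hu⟩ := hp
  have := hf.nat u (by rw [h0, h1]) (fun i hi => ?_) fun i hi => (hu i (by omega)).2
  · rw [← h0, this]
    rfl
  · cases i with
    | zero => simpa [h0] using ha
    | succ i => exact (hu i (by omega)).1.trans_le (hH i (by omega))

namespace WrongPath

variable {F : ℕ → ℕ → ℕ → ℕ} {H : ℕ → ℕ} {n a b c x y z : ℕ}

theorem zero (F : ℕ → ℕ → ℕ → ℕ) (H : ℕ → ℕ) (a b : ℕ) : WrongPath F H 0 a b a b :=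
  ⟨fun i => if i = 0 then a else b, by simp⟩

theorem snoc (hp : WrongPath F H n a b x y) (hy : y < H (n + 1)) (hne : y ≠ F (n + 1) x z) :
    WrongPath F H (n + 1) a b y z := by
  obtain ⟨u, h0, h1, rfl, rfl, hu⟩ := hp
  refine ⟨Function.update u (n + 2) z, ?_, ?_, ?_, ?_, fun i hi => ?_⟩
  · rw [Function.update_of_ne (by omega), h0]
  · rw [Function.update_of_ne (by omega), h1]
  · rw [Function.update_of_ne (by omega)]
  · rw [Function.update_self]
  · rw [Function.update_of_ne (show i + 1 ≠ n + 2 by omega),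
      Function.update_of_ne (show i ≠ n + 2 by omega)]
    rcases Nat.lt_succ_iff_lt_or_eq.1 hi with hi | rfl
    · rw [Function.update_of_ne (by omega)]
      exact hu i hi
    · rw [Function.update_self]
      exact ⟨hy, hne⟩

theorem cons (hp : WrongPath (fun i => F (i + 1)) (fun i => H (i + 1)) n b c y z) (hb : b < H 1)
    (hne : b ≠ F 1 a c) : WrongPath F H (n + 1) a b y z := by
  obtain ⟨u, rfl, rfl, rfl, rfl, hu⟩ := hp
  refine ⟨fun i => i.casesOn a u, rfl, rfl, rfl, rfl, fun i hi => ?_⟩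
  cases i with
  | zero => exact ⟨hb, hne⟩
  | succ i => exact hu i (by omega)

theorem one (hb : b < H 1) (hne : b ≠ F 1 a z) : WrongPath F H 1 a b b z :=
  (zero F H a b).snoc hb hne

theorem last_lt (hp : WrongPath F H (n + 1) a b y z) : y < H (n + 1) := by
  obtain ⟨u, -, -, rfl, -, hu⟩ := hp
  exact (hu n (by omega)).1

theorem first_lt (hp : WrongPath F H (n + 1) a b y z) : b < H 1 := by
  obtain ⟨u, -, rfl, -, -, hu⟩ := hp
  exact (hu 0 (by omega)).1

theorem exists_last_ne (hH : ∀ i < n + 1, H (i + 1) = 3) (a z e : ℕ) :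
    ∃ b y, y ≠ e ∧ WrongPath F H (n + 1) a b y z := by
  induction n generalizing z e with
  | zero =>
    have h1 := hH 0 (by omega)
    obtain ⟨y, hy, hye, hyF⟩ : ∃ y < 3, y ≠ e ∧ y ≠ F 1 a z := by
      by_contra! hcon
      have := hcon 0
      have := hcon 1
      have := hcon 2
      omega
    exact ⟨y, y, hye, one (by rwa [h1]) hyF⟩
  | succ n ih =>
    have ih' := ih fun i hi => hH i (by omega)
    have h1 := hH n (by omega)
    have h2 := hH (n + 1) (by omega)
    by_contra! hcon
    have key : ∀ y < 3, y ≠ e → ∃ x x', x < 3 ∧ x' < 3 ∧ x ≠ x' ∧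
        F (n + 2) x z = y ∧ F (n + 2) x' z = y := by
      intro y hy hye
      obtain ⟨b, x, -, hx⟩ := ih' y 0
      obtain ⟨b', x', hxx, hx'⟩ := ih' y x
      refine ⟨x, x', h1 ▸ hx.last_lt, h1 ▸ hx'.last_lt, hxx.symm, ?_, ?_⟩
      · by_contra hne
        exact hcon b y hye (hx.snoc (by rwa [h2]) (Ne.symm hne))
      · by_contra hne
        exact hcon b' y hye (hx'.snoc (by rwa [h2]) (Ne.symm hne))
    obtain ⟨y, y', hy, hy', hyy, hye, hye'⟩ :
        ∃ y y', y < 3 ∧ y' < 3 ∧ y ≠ y' ∧ y ≠ e ∧ y' ≠ e :=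
      ⟨if e = 0 then 1 else 0, if e = 2 then 1 else 2, by split_ifs <;> omega⟩
    obtain ⟨x1, x2, hx1, hx2, hx, h3, h4⟩ := key y hy hye
    obtain ⟨x3, x4, hx3, hx4, hx', h5, h6⟩ := key y' hy' hye'
    have : x3 = x1 ∨ x3 = x2 ∨ x4 = x1 ∨ x4 = x2 := by omega
    rcases this with rfl | rfl | rfl | rfl <;> omega

theorem exists_first_ne (hH : ∀ i < n + 1, H (i + 1) = 3) (a z e : ℕ) :
    ∃ b y, b ≠ e ∧ WrongPath F H (n + 1) a b y z := by
  induction n generalizing a e F H with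
  | zero =>
    obtain ⟨b, y, hy, hp⟩ := exists_last_ne (F := F) hH a z e
    have : b = y := by
      obtain ⟨u, -, h1, h2, -⟩ := hp
      rw [← h1, ← h2]
    exact ⟨b, y, this ▸ hy, hp⟩
  | succ n ih =>
    have ih' := ih (F := fun i => F (i + 1)) (H := fun i => H (i + 1))
      fun i hi => hH (i + 1) (by omega)
    have h1 := hH 0 (by omega)
    have h2 := hH 1 (by omega)
    by_contra! hcon
    have key : ∀ y < 3, y ≠ e → ∃ x x', x < 3 ∧ x' < 3 ∧ x ≠ x' ∧
        F 1 a x = y ∧ F 1 a x' = y := by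
      intro y hy hye
      obtain ⟨x, w, -, hx⟩ := ih' y 0
      obtain ⟨x', w', hxx, hx'⟩ := ih' y x
      refine ⟨x, x', hx.first_lt.trans_eq h2, hx'.first_lt.trans_eq h2, hxx.symm, ?_, ?_⟩
      · by_contra hne
        exact hcon y w hye (hx.cons (by rwa [h1]) (Ne.symm hne))
      · by_contra hne
        exact hcon y w' hye (hx'.cons (by rwa [h1]) (Ne.symm hne))
    obtain ⟨y, y', hy, hy', hyy, hye, hye'⟩ :
        ∃ y y', y < 3 ∧ y' < 3 ∧ y ≠ y' ∧ y ≠ e ∧ y' ≠ e :=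
      ⟨if e = 0 then 1 else 0, if e = 2 then 1 else 2, by split_ifs <;> omega⟩
    obtain ⟨x1, x2, hx1, hx2, hx, h3, h4⟩ := key y hy hye
    obtain ⟨x3, x4, hx3, hx4, hx', h5, h6⟩ := key y' hy' hye'
    have : x3 = x1 ∨ x3 = x2 ∨ x4 = x1 ∨ x4 = x2 := by omega
    rcases this with rfl | rfl | rfl | rfl <;> omega

theorem exists_ends_ne (hH : ∀ i < n + 2, H (i + 1) = 3) (a z : ℕ) (e e' : ℕ × ℕ) :
    ∃ b y, (b, y) ≠ e ∧ (b, y) ≠ e' ∧ WrongPath F H (n + 2) a b y z := by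
  have hH' : ∀ i < n + 1, H (i + 1) = 3 := fun i hi => hH i (by omega)
  have h1 := hH n (by omega)
  have h2 := hH (n + 1) (by omega)
  obtain ⟨b1, y1⟩ := e
  obtain ⟨b2, y2⟩ := e'
  by_contra! hcon
  simp only [ne_eq, Prod.mk.injEq, not_and] at hcon
  have key : ∀ y < 3, y ≠ y1 → y ≠ y2 → ∃ x x', x < 3 ∧ x' < 3 ∧ x ≠ x' ∧
      F (n + 2) x z = y ∧ F (n + 2) x' z = y := by
    intro y hy hye hye'
    obtain ⟨b, x, -, hx⟩ := exists_last_ne (F := F) hH' a y 0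
    obtain ⟨b', x', hxx, hx'⟩ := exists_last_ne (F := F) hH' a y x
    refine ⟨x, x', h1 ▸ hx.last_lt, h1 ▸ hx'.last_lt, hxx.symm, ?_, ?_⟩
    · by_contra hne
      exact hcon b y (fun _ => hye) (fun _ => hye') (hx.snoc (by rwa [h2]) (Ne.symm hne))
    · by_contra hne
      exact hcon b' y (fun _ => hye) (fun _ => hye') (hx'.snoc (by rwa [h2]) (Ne.symm hne))
  have key2 : ∀ y < 3, ∀ b, (∀ b' y', y' = y → b' ≠ b → ¬ WrongPath F H (n + 2) a b' y' z) →
      ∃ x < 3, F (n + 2) x z = y := by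
    intro y hy b hb
    obtain ⟨b', x, hbb, hx⟩ := exists_first_ne (F := F) hH' a y b
    refine ⟨x, h1 ▸ hx.last_lt, ?_⟩
    by_contra hne
    exact hb b' y rfl hbb (hx.snoc (by rwa [h2]) (Ne.symm hne))
  obtain ⟨y, hy, hye, hye'⟩ : ∃ y < 3, y ≠ y1 ∧ y ≠ y2 := by
    by_contra! hcon
    have := hcon 0
    have := hcon 1
    have := hcon 2
    omega
  obtain ⟨x1, x2, hx1, hx2, hx, h3, h4⟩ := key y hy hye hye'
  by_cases hex : ∃ y' < 3, y' ≠ y ∧ y' ≠ y1 ∧ y' ≠ y2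
  · obtain ⟨y', hy', hyy, hye, hye'⟩ := hex
    obtain ⟨x3, x4, hx3, hx4, hx', h5, h6⟩ := key y' hy' hye hye'
    have : x3 = x1 ∨ x3 = x2 ∨ x4 = x1 ∨ x4 = x2 := by omega
    rcases this with rfl | rfl | rfl | rfl <;> omega
  · push Not at hex
    have := hex 0
    have := hex 1
    have := hex 2
    have hlt : y1 < 3 := by omega
    have hlt' : y2 < 3 := by omega
    have hyy : y1 ≠ y2 := by omega
    obtain ⟨x3, hx3, h5⟩ := key2 y1 hlt b1 fun b' y' h1 h2 =>
      hcon b' y' (fun h => absurd h h2) fun _ => h1 ▸ hyy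
    obtain ⟨x4, hx4, h6⟩ := key2 y2 hlt' b2 fun b' y' h1 h2 =>
      hcon b' y' (fun _ => h1 ▸ hyy.symm) fun h => absurd h h2
    have : x3 = x1 ∨ x3 = x2 ∨ x4 = x1 ∨ x4 = x2 ∨ x3 = x4 := by omega
    rcases this with rfl | rfl | rfl | rfl | rfl <;> omega

end WrongPath

theorem _root_.Finset.two_le_card_of_forall_exists_ne {α : Type*} {s : Finset α} (a : α)
    (hs : ∀ e, ∃ x ∈ s, x ≠ e) : 2 ≤ s.card := by
  obtain ⟨x, hx, -⟩ := hs a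
  obtain ⟨y, hy, hyx⟩ := hs x
  exact Finset.one_lt_card.2 ⟨y, hy, x, hx, hyx⟩

theorem _root_.Finset.three_le_card_of_forall_exists_ne {α : Type*} {s : Finset α} (a : α)
    (hs : ∀ e e', ∃ x ∈ s, x ≠ e ∧ x ≠ e') : 3 ≤ s.card := by
  obtain ⟨x, hx, -⟩ := hs a a
  obtain ⟨y, hy, hyx, -⟩ := hs x x
  obtain ⟨z, hz, hzx, hzy⟩ := hs x y
  exact Finset.two_lt_card.2 ⟨x, hx, y, hy, z, hz, hyx.symm, hzx.symm, hzy.symm⟩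

theorem not_cycleWins_of_four {n : ℕ} {h : ZMod (n + 3) → ℕ} (h0 : 4 ≤ h 0) (hh : ∀ v, 3 ≤ h v)
    (f : ZMod (n + 3) → ℕ → ℕ → ℕ) : ¬ CycleWins (n + 3) h f := by
  intro hf
  obtain ⟨a, ha, hcard⟩ := Finset.exists_card_fiber_lt_of_card_lt_mul
    (s := Finset.range 3 ×ˢ Finset.range 3) (t := Finset.range 4) (n := 3)
    (f := fun p => f 0 p.2 p.1) (by simp)
  refine hcard.not_ge (Finset.three_le_card_of_forall_exists_ne (0, 0) fun e e' => ?_)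
  obtain ⟨b, y, hne, hne', hp⟩ := WrongPath.exists_ends_ne (n := n) (F := fun i => f i)
    (H := fun _ => 3) (fun _ _ => rfl) a a e e'
  refine ⟨(b, y), ?_, hne, hne'⟩
  simp only [Finset.mem_filter, Finset.mem_product, Finset.mem_range]
  exact ⟨⟨hp.first_lt, hp.last_lt⟩,
    hf.eq_of_wrongPath (fun i _ => hh _) ((Finset.mem_range.1 ha).trans_le h0) hp⟩

/-- Any two of the sets `{y | R w y}` meet. -/
def StronglyMeeting (R : ℕ → ℕ → Prop) : Prop := ∀ w w', ∃ y, R w y ∧ R w' y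

/-- Among any three of the sets `{y | R w y}` some two meet. -/
def WeaklyMeeting (R : ℕ → ℕ → Prop) : Prop :=
  ∀ w₁ w₂ w₃, (∃ y, R w₁ y ∧ R w₂ y) ∨ (∃ y, R w₁ y ∧ R w₃ y) ∨ ∃ y, R w₂ y ∧ R w₃ y

theorem StronglyMeeting.exists_ne {R : ℕ → ℕ → Prop} (hR : StronglyMeeting R) (φ : ℕ → ℕ)
    {w w' : ℕ} (hw : w ≠ w') : (∃ y, R w y ∧ w ≠ φ y) ∨ ∃ y, R w' y ∧ w' ≠ φ y := by
  obtain ⟨y, h1, h2⟩ := hR w w'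
  by_cases h : w = φ y
  · exact Or.inr ⟨y, h2, fun h' => hw (h.trans h'.symm)⟩
  · exact Or.inl ⟨y, h1, h⟩

theorem WeaklyMeeting.exists_ne {R : ℕ → ℕ → Prop} (hR : WeaklyMeeting R) (φ : ℕ → ℕ)
    {w₁ w₂ w₃ : ℕ} (h12 : w₁ ≠ w₂) (h13 : w₁ ≠ w₃) (h23 : w₂ ≠ w₃) :
    (∃ y, R w₁ y ∧ w₁ ≠ φ y) ∨ (∃ y, R w₂ y ∧ w₂ ≠ φ y) ∨ ∃ y, R w₃ y ∧ w₃ ≠ φ y := by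
  by_contra! hcon
  obtain ⟨hc1, hc2, hc3⟩ := hcon
  rcases hR w₁ w₂ w₃ with ⟨y, h1, h2⟩ | ⟨y, h1, h2⟩ | ⟨y, h1, h2⟩
  · exact h12 ((hc1 y h1).trans (hc2 y h2).symm)
  · exact h13 ((hc1 y h1).trans (hc3 y h2).symm)
  · exact h23 ((hc2 y h1).trans (hc3 y h2).symm)

theorem StronglyMeeting.step {R : ℕ → ℕ → Prop} (hR : StronglyMeeting R) (φ : ℕ → ℕ → ℕ) :
    StronglyMeeting fun u w => w < 3 ∧ ∃ y, R w y ∧ w ≠ φ y u := by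
  intro u u'
  obtain ⟨A, hA⟩ : ∃ A : ℕ → ℕ → Prop, ∀ w u, A w u ↔ ∃ y, R w y ∧ w ≠ φ y u :=
    ⟨_, fun _ _ => Iff.rfl⟩
  have hpair : ∀ v w w', w ≠ w' → A w v ∨ A w' v := fun v w w' hw => by
    simpa only [hA] using hR.exists_ne (fun y => φ y v) hw
  simp only [← hA]
  by_contra! hcon
  have h9 := hcon 0
  have h10 := hcon 1
  have h11 := hcon 2
  have h1 := hpair u
  have h2 := hpair u'
  clear hcon hpair
  grind

theorem WeaklyMeeting.step {R : ℕ → ℕ → Prop} (hR : WeaklyMeeting R) (φ : ℕ → ℕ → ℕ) :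
    WeaklyMeeting fun u w => w < 3 ∧ ∃ y, R w y ∧ w ≠ φ y u := by
  intro u₁ u₂ u₃
  obtain ⟨A, hA⟩ : ∃ A : ℕ → ℕ → Prop, ∀ w u, A w u ↔ ∃ y, R w y ∧ w ≠ φ y u :=
    ⟨_, fun _ _ => Iff.rfl⟩
  simp only [← hA]
  by_contra! hcon
  obtain ⟨hc12, hc13, hc23⟩ := hcon
  have hK : ∀ w < 3, ∀ w' < 3, w ≠ w' → ∃ u, ¬ A w u ∧ ¬ A w' u := by
    intro w hw w' hw' hne
    by_contra! hcon
    have h1 : ∀ v < 3, A v u₁ → ¬ A v u₂ := fun v hv h => hc12 v ⟨hv, h⟩ hv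
    have h2 : ∀ v < 3, A v u₁ → ¬ A v u₃ := fun v hv h => hc13 v ⟨hv, h⟩ hv
    have h3 : ∀ v < 3, A v u₂ → ¬ A v u₃ := fun v hv h => hc23 v ⟨hv, h⟩ hv
    have h7 := or_iff_not_imp_left.2 (hcon u₁)
    have h8 := or_iff_not_imp_left.2 (hcon u₂)
    have h9 := or_iff_not_imp_left.2 (hcon u₃)
    clear hcon hA hR hc12 hc13 hc23
    grind
  have hmeet : ∀ w < 3, ∀ w' < 3, w ≠ w' → ¬ ∃ y, R w y ∧ R w' y := by
    rintro w hw w' hw' hne ⟨y, h1, h2⟩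
    obtain ⟨u, h3, h4⟩ := hK w hw w' hw' hne
    rw [hA] at h3 h4
    push Not at h3 h4
    exact hne ((h3 y h1).trans (h4 y h2).symm)
  rcases hR 0 1 2 with h | h | h
  all_goals exact hmeet _ (by omega) _ (by omega) (by omega) h

theorem StronglyMeeting.of_imp {R R' : ℕ → ℕ → Prop} (hR : StronglyMeeting R)
    (h : ∀ w y, R w y → R' w y) : StronglyMeeting R' := fun w w' =>
  let ⟨y, h1, h2⟩ := hR w w'
  ⟨y, h _ _ h1, h _ _ h2⟩

theorem WeaklyMeeting.of_imp {R R' : ℕ → ℕ → Prop} (hR : WeaklyMeeting R)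
    (h : ∀ w y, R w y → R' w y) : WeaklyMeeting R' := fun w₁ w₂ w₃ =>
  (hR w₁ w₂ w₃).imp (fun ⟨y, h1, h2⟩ => ⟨y, h _ _ h1, h _ _ h2⟩)
    (Or.imp (fun ⟨y, h1, h2⟩ => ⟨y, h _ _ h1, h _ _ h2⟩) fun ⟨y, h1, h2⟩ =>
      ⟨y, h _ _ h1, h _ _ h2⟩)

theorem stronglyMeeting_of_two_lt_card {s : Finset ℕ} (hs : 2 < s.card) (φ : ℕ → ℕ) :
    StronglyMeeting fun w y => y ∈ s ∧ y ≠ φ w := by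
  intro w w'
  obtain ⟨x, hx, y, hy, z, hz, h⟩ := Finset.two_lt_card.1 hs
  by_contra! hcon
  have := hcon x
  have := hcon y
  have := hcon z
  grind

theorem weaklyMeeting_of_one_lt_card {s : Finset ℕ} (hs : 1 < s.card) (φ : ℕ → ℕ) :
    WeaklyMeeting fun w y => y ∈ s ∧ y ≠ φ w := by
  intro w₁ w₂ w₃
  obtain ⟨x, hx, y, hy, h⟩ := Finset.one_lt_card.1 hs
  by_contra! hcon
  obtain ⟨hc1, hc2, hc3⟩ := hcon
  have := hc1 x
  have := hc1 y
  have := hc2 x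
  have := hc2 y
  have := hc3 x
  have := hc3 y
  grind

namespace WrongPath

variable {F : ℕ → ℕ → ℕ → ℕ} {H : ℕ → ℕ} {n : ℕ}

theorem meeting (h1 : H 1 = 2) (h2 : H 2 = 4) (h3 : ∀ i < n, H (i + 3) = 3) (a : ℕ) :
    StronglyMeeting (fun w y => WrongPath F H (n + 2) a 0 y w) ∨
    StronglyMeeting (fun w y => WrongPath F H (n + 2) a 1 y w) ∨
    WeaklyMeeting (fun w y => WrongPath F H (n + 2) a 0 y w) ∧
      WeaklyMeeting (fun w y => WrongPath F H (n + 2) a 1 y w) := by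
  induction n with
  | zero =>
    let s : ℕ → Finset ℕ := fun b => (Finset.range 4).filter fun y => b ≠ F 1 a y
    have hs : 4 ≤ (s 0).card + (s 1).card := by
      refine le_trans ?_ (Finset.card_union_le _ _)
      refine (Finset.card_range 4).symm.trans_le (Finset.card_le_card fun y hy => ?_)
      simp only [s, Finset.mem_union, Finset.mem_filter, hy, true_and]
      omega
    have himp : ∀ b < 2, ∀ w y, y ∈ s b ∧ y ≠ F 2 b w → WrongPath F H 2 a b y w := by
      intro b hb w y hy
      simp only [s, Finset.mem_filter, Finset.mem_range] at hy
      exact (one (by omega) hy.1.2).snoc (by simp [h2, hy]) hy.2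
    by_cases hs0 : 2 < (s 0).card
    · exact Or.inl ((stronglyMeeting_of_two_lt_card hs0 _).of_imp (himp 0 (by omega)))
    by_cases hs1 : 2 < (s 1).card
    · exact Or.inr (Or.inl ((stronglyMeeting_of_two_lt_card hs1 _).of_imp (himp 1 (by omega))))
    exact Or.inr (Or.inr
      ⟨(weaklyMeeting_of_one_lt_card (by omega) _).of_imp (himp 0 (by omega)),
        (weaklyMeeting_of_one_lt_card (by omega) _).of_imp (himp 1 (by omega))⟩)
  | succ n ih =>
    have himp : ∀ b u w, (w < 3 ∧ ∃ y, WrongPath F H (n + 2) a b y w ∧ w ≠ F (n + 3) y u) →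
        WrongPath F H (n + 3) a b w u := by
      rintro b u w ⟨hw, y, hy, hne⟩
      exact hy.snoc (by rwa [h3 n (by omega)]) hne
    exact (ih fun i hi => h3 i (by omega)).imp (fun h => (h.step _).of_imp (himp 0))
      (Or.imp (fun h => (h.step _).of_imp (himp 1))
        fun h => ⟨(h.1.step _).of_imp (himp 0), (h.2.step _).of_imp (himp 1)⟩)

theorem exists_ends_ne_of_three (h1 : H 1 = 2) (h2 : H 2 = 4) (h3 : ∀ i ≤ n, H (i + 3) = 3)
    (a z : ℕ) (e : ℕ × ℕ) : ∃ b y, (b, y) ≠ e ∧ WrongPath F H (n + 3) a b y z := by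
  obtain ⟨b', y'⟩ := e
  have hn := h3 n le_rfl
  have hsnoc : ∀ b w, w < 3 → (∃ y, WrongPath F H (n + 2) a b y w ∧ w ≠ F (n + 3) y z) →
      WrongPath F H (n + 3) a b w z := by
    rintro b w hw ⟨y, hy, hne⟩
    exact hy.snoc (by rwa [hn]) hne
  have hstrong : ∀ b, StronglyMeeting (fun w y => WrongPath F H (n + 2) a b y w) →
      ∃ b y, (b, y) ≠ (b', y') ∧ WrongPath F H (n + 3) a b y z := by
    intro b hb
    obtain ⟨w, w', hw, hw', hww, hwy, hwy'⟩ :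
        ∃ w w', w < 3 ∧ w' < 3 ∧ w ≠ w' ∧ w ≠ y' ∧ w' ≠ y' :=
      ⟨if y' = 0 then 1 else 0, if y' = 2 then 1 else 2, by split_ifs <;> omega⟩
    rcases hb.exists_ne (fun y => F (n + 3) y z) hww with h | h
    · exact ⟨b, w, by simp [hwy], hsnoc b w hw h⟩
    · exact ⟨b, w', by simp [hwy'], hsnoc b w' hw' h⟩
  have hweak : ∀ b, b ≠ b' → WeaklyMeeting (fun w y => WrongPath F H (n + 2) a b y w) →
      ∃ b y, (b, y) ≠ (b', y') ∧ WrongPath F H (n + 3) a b y z := by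
    intro b hbb hb
    rcases hb.exists_ne (fun y => F (n + 3) y z) (show 0 ≠ 1 by omega) (show 0 ≠ 2 by omega)
      (by omega) with h | h | h
    all_goals exact ⟨b, _, by simp [hbb], hsnoc b _ (by omega) h⟩
  rcases meeting (F := F) h1 h2 (fun i hi => h3 i hi.le) a with h | h | h
  · exact hstrong 0 h
  · exact hstrong 1 h
  · by_cases hb : b' = 0
    · exact hweak 1 (by omega) h.2
    · exact hweak 0 (by omega) h.1

theorem exists_ends_ne_of_four (h1 : H 1 = 2) (h2 : H 2 = 4) (h3 : ∀ i < n, H (i + 3) = 3)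
    (h4 : H (n + 3) = 4) (a z : ℕ) (e e' : ℕ × ℕ) :
    ∃ b y, (b, y) ≠ e ∧ (b, y) ≠ e' ∧ WrongPath F H (n + 3) a b y z := by
  obtain ⟨b₁, y₁⟩ := e
  obtain ⟨b₂, y₂⟩ := e'
  have hsnoc : ∀ b w, w < 4 → (∃ y, WrongPath F H (n + 2) a b y w ∧ w ≠ F (n + 3) y z) →
      WrongPath F H (n + 3) a b w z := by
    rintro b w hw ⟨y, hy, hne⟩
    exact hy.snoc (by rwa [h4]) hne
  have hstrong : ∀ b, StronglyMeeting (fun w y => WrongPath F H (n + 2) a b y w) →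
      ∃ b y, (b, y) ≠ (b₁, y₁) ∧ (b, y) ≠ (b₂, y₂) ∧ WrongPath F H (n + 3) a b y z := by
    intro b hb
    obtain ⟨w, w', hw, hw', hww, hwy, hwy', hwz, hwz'⟩ :
        ∃ w w', w < 4 ∧ w' < 4 ∧ w ≠ w' ∧ w ≠ y₁ ∧ w' ≠ y₁ ∧ w ≠ y₂ ∧ w' ≠ y₂ := by
      obtain ⟨w, hw, hwy, hwz⟩ : ∃ w < 4, w ≠ y₁ ∧ w ≠ y₂ := by
        by_contra! hcon
        have := hcon 0
        have := hcon 1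
        have := hcon 2
        omega
      by_contra! hcon
      have := hcon w 0
      have := hcon w 1
      have := hcon w 2
      have := hcon w 3
      omega
    rcases hb.exists_ne (fun y => F (n + 3) y z) hww with h | h
    · exact ⟨b, w, by simp [hwy], by simp [hwz], hsnoc b w hw h⟩
    · exact ⟨b, w', by simp [hwy'], by simp [hwz'], hsnoc b w' hw' h⟩
  have hweak : ∀ b, WeaklyMeeting (fun w y => WrongPath F H (n + 2) a b y w) → ∀ y₀,
      ∃ y ≠ y₀, WrongPath F H (n + 3) a b y z := by
    intro b hb y₀
    obtain ⟨w₁, w₂, w₃, hw⟩ : ∃ w₁ w₂ w₃, w₁ < 4 ∧ w₂ < 4 ∧ w₃ < 4 ∧ w₁ ≠ w₂ ∧ w₁ ≠ w₃ ∧ w₂ ≠ w₃ ∧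
        w₁ ≠ y₀ ∧ w₂ ≠ y₀ ∧ w₃ ≠ y₀ :=
      ⟨if y₀ = 0 then 1 else 0, if y₀ ≤ 1 then 2 else 1, if y₀ = 3 then 2 else 3,
        by split_ifs <;> omega⟩
    rcases hb.exists_ne (fun y => F (n + 3) y z) hw.2.2.2.1 hw.2.2.2.2.1 hw.2.2.2.2.2.1
      with h | h | h
    all_goals exact ⟨_, by omega, hsnoc b _ (by omega) h⟩
  rcases meeting (F := F) h1 h2 h3 a with h | h | h
  · exact hstrong 0 h
  · exact hstrong 1 h
  · by_cases hb : b₁ = 0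
    · by_cases hb' : b₂ = 0
      · obtain ⟨y, -, hy⟩ := hweak 1 h.2 0
        exact ⟨1, y, by simp [hb], by simp [hb'], hy⟩
      · obtain ⟨y, hne, hy⟩ := hweak 0 h.1 y₁
        exact ⟨0, y, by simp [hne], by simp [Ne.symm hb'], hy⟩
    · obtain ⟨y, hne, hy⟩ := hweak 0 h.1 y₂
      exact ⟨0, y, by simp [Ne.symm hb], by simp [hne], hy⟩

end WrongPath

theorem not_cycleWins_of_four_two_four {n : ℕ} {h : ZMod (n + 4) → ℕ} (h0 : h 0 = 4)
    (h1 : h 1 = 2) (h2 : h 2 = 4) (hh : ∀ v ≠ 1, 3 ≤ h v) (f : ZMod (n + 4) → ℕ → ℕ → ℕ) :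
    ¬ CycleWins (n + 4) h f := by
  intro hf
  obtain ⟨a, ha, hcard⟩ := Finset.exists_card_fiber_lt_of_card_lt_mul
    (s := Finset.range 2 ×ˢ Finset.range 3) (t := Finset.range 4) (n := 2)
    (f := fun p => f 0 p.2 p.1) (by simp)
  let H : ℕ → ℕ := fun i => if i = 1 then 2 else if i = 2 then 4 else 3
  have hH : ∀ i < n + 3, H (i + 1) ≤ h (i + 1 : ℕ) := by
    intro i hi
    simp only [H]
    split_ifs with hi1 hi2
    · simp [hi1, h1]
    · simp [hi2, h2]
    · refine hh _ fun hcon => hi1 ?_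
      have := congrArg ZMod.val hcon
      rwa [ZMod.val_cast_of_lt (by omega), ZMod.val_one_eq_one_mod, Nat.mod_eq_of_lt (by omega)]
        at this
  refine hcard.not_ge (Finset.two_le_card_of_forall_exists_ne (0, 0) fun e => ?_)
  obtain ⟨b, y, hne, hp⟩ := WrongPath.exists_ends_ne_of_three (n := n) (F := fun i => f i)
    (H := H) rfl rfl (fun i _ => by simp [H]) a a e
  refine ⟨(b, y), ?_, hne⟩
  simp only [Finset.mem_filter, Finset.mem_product, Finset.mem_range]
  exact ⟨⟨hp.first_lt, by simpa [H] using hp.last_lt⟩,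
    hf.eq_of_wrongPath hH ((Finset.mem_range.1 ha).trans_eq h0.symm) hp⟩

theorem not_cycleWins_of_three_two_four {n : ℕ} {h : ZMod (n + 4) → ℕ} (h0 : h 0 = 3)
    (h1 : h 1 = 2) (h2 : h 2 = 4) (h3 : h (-1) = 4) (hh : ∀ v ≠ 1, 3 ≤ h v)
    (f : ZMod (n + 4) → ℕ → ℕ → ℕ) : ¬ CycleWins (n + 4) h f := by
  intro hf
  obtain ⟨a, ha, hcard⟩ := Finset.exists_card_fiber_lt_of_card_lt_mul
    (s := Finset.range 2 ×ˢ Finset.range 4) (t := Finset.range 3) (n := 3)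
    (f := fun p => f 0 p.2 p.1) (by simp)
  let H : ℕ → ℕ := fun i => if i = 1 then 2 else if i = 2 ∨ i = n + 3 then 4 else 3
  have hH : ∀ i < n + 3, H (i + 1) ≤ h (i + 1 : ℕ) := by
    intro i hi
    simp only [H]
    split_ifs with hi1 hi2
    · simp [hi1, h1]
    · rcases hi2 with hi2 | hi2
      · simp [hi2, h2]
      · rw [hi2, show ((n + 3 : ℕ) : ZMod (n + 4)) = ((n + 4 : ℕ) : ZMod (n + 4)) - 1 by
          push_cast; ring, ZMod.natCast_self, zero_sub, h3]
    · refine hh _ fun hcon => hi1 ?_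
      have := congrArg ZMod.val hcon
      rwa [ZMod.val_cast_of_lt (by omega), ZMod.val_one_eq_one_mod, Nat.mod_eq_of_lt (by omega)]
        at this
  refine hcard.not_ge (Finset.three_le_card_of_forall_exists_ne (0, 0) fun e e' => ?_)
  obtain ⟨b, y, hne, hne', hp⟩ := WrongPath.exists_ends_ne_of_four (n := n) (F := fun i => f i)
    (H := H) rfl rfl (fun i hi => by simp only [H]; split_ifs <;> omega) (by simp [H]) a a e e'
  refine ⟨(b, y), ?_, hne, hne'⟩
  simp only [Finset.mem_filter, Finset.mem_product, Finset.mem_range]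
  exact ⟨⟨hp.first_lt, by simpa [H] using hp.last_lt⟩,
    hf.eq_of_wrongPath hH ((Finset.mem_range.1 ha).trans_eq h0.symm) hp⟩

/-- The number of times the color `y` occurs in the row `x` of the table `t`. -/
def rowCount (t : Fin 3 → Fin 3 → Fin 3) (x y : Fin 3) : ℕ :=
  (if t x 0 = y then 1 else 0) + (if t x 1 = y then 1 else 0) + if t x 2 = y then 1 else 0

/-- The number of times the color `y` occurs in the column `z` of the table `t`. -/
def colCount (t : Fin 3 → Fin 3 → Fin 3) (y z : Fin 3) : ℕ :=
  (if t 0 z = y then 1 else 0) + (if t 1 z = y then 1 else 0) + if t 2 z = y then 1 else 0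

theorem rowCount_eq_card (t : Fin 3 → Fin 3 → Fin 3) (x y : Fin 3) :
    rowCount t x y = (Finset.univ.filter fun z => t x z = y).card := by
  rw [Finset.card_filter, Fin.sum_univ_three]
  rfl

theorem colCount_eq_card (t : Fin 3 → Fin 3 → Fin 3) (y z : Fin 3) :
    colCount t y z = (Finset.univ.filter fun x => t x z = y).card := by
  rw [Finset.card_filter, Fin.sum_univ_three]
  rfl

theorem sum_rowCount (t : Fin 3 → Fin 3 → Fin 3) (x : Fin 3) :
    rowCount t x 0 + rowCount t x 1 + rowCount t x 2 = 3 := by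
  simp only [rowCount_eq_card, ← Fin.sum_univ_three fun y => (Finset.univ.filter
    fun z => t x z = y).card]
  exact (Finset.card_eq_sum_card_fiberwise (s := Finset.univ) (t := Finset.univ)
    (f := fun z => t x z) (by simp)).symm

theorem sum_colCount (t : Fin 3 → Fin 3 → Fin 3) (z : Fin 3) :
    colCount t 0 z + colCount t 1 z + colCount t 2 z = 3 := by
  simp only [colCount_eq_card, ← Fin.sum_univ_three fun y => (Finset.univ.filter
    fun x => t x z = y).card]
  exact (Finset.card_eq_sum_card_fiberwise (s := Finset.univ) (t := Finset.univ)
    (f := fun x => t x z) (by simp)).symm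

theorem rowCount_ne_zero (t : Fin 3 → Fin 3 → Fin 3) (x z : Fin 3) :
    rowCount t x (t x z) ≠ 0 := by
  rw [rowCount_eq_card]
  exact Finset.card_ne_zero_of_mem (a := z) (by simp)

theorem colCount_ne_zero (t : Fin 3 → Fin 3 → Fin 3) (x z : Fin 3) :
    colCount t (t x z) z ≠ 0 := by
  rw [colCount_eq_card]
  exact Finset.card_ne_zero_of_mem (a := x) (by simp)

/-- The table with the given entries, read row by row. -/
def tableOf (a b c d e f g h i : Fin 3) (x z : Fin 3) : Fin 3 :=
  match x, z with
  | 0, 0 => a | 0, 1 => b | 0, 2 => c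
  | 1, 0 => d | 1, 1 => e | 1, 2 => f
  | 2, 0 => g | 2, 1 => h | 2, 2 => i

/-- Every color which is a majority of a row and occurs in a column is also the color in which they
meet, and symmetrically; a row and a column are never both rainbow. -/
def Balanced (t : Fin 3 → Fin 3 → Fin 3) : Prop :=
  (∀ x z y, t x z ≠ y →
    (rowCount t x y = 2 → colCount t y z = 0) ∧ (colCount t y z = 2 → rowCount t x y = 0)) ∧
  ∀ x z, (∃ y, rowCount t x y ≠ 1) ∨ ∃ y, colCount t y z ≠ 1

/-- Every row and every column has a majority color and misses the color obtained from it by the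
shift `ε`; no entry is unique both in its row and in its column. -/
def TwistedBy (t : Fin 3 → Fin 3 → Fin 3) (ε : Fin 3) : Prop :=
  (∀ x, ∃ y, rowCount t x y = 2 ∧ rowCount t x (y + ε) = 0) ∧
  (∀ z, ∃ y, colCount t y z = 2 ∧ colCount t (y + ε) z = 0) ∧
  ∀ x z, rowCount t x (t x z) ≠ 1 ∨ colCount t (t x z) z ≠ 1

instance : DecidablePred Balanced := fun t => by unfold Balanced; infer_instance

instance (t : Fin 3 → Fin 3 → Fin 3) : DecidablePred (TwistedBy t) := fun ε => by
  unfold TwistedBy; infer_instance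

set_option maxRecDepth 100000 in
theorem exists_twistedBy_tableOf : ∀ a b c : Fin 3, ¬ (b = a ∧ c = a) →
    ∀ d e f : Fin 3, ¬ (e = d ∧ f = d) → ∀ g : Fin 3, ¬ (d = a ∧ g = a) →
    ∀ h : Fin 3, ¬ (e = b ∧ h = b) → ∀ i : Fin 3,
    ¬ (h = g ∧ i = g) → ¬ (f = c ∧ i = c) →
    4 ^ a.val + 4 ^ b.val + 4 ^ c.val + 4 ^ d.val + 4 ^ e.val + 4 ^ f.val + 4 ^ g.val + 4 ^ h.val +
      4 ^ i.val = 63 →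
    Balanced (tableOf a b c d e f g h i) → ∃ ε ≠ 0, TwistedBy (tableOf a b c d e f g h i) ε := by
  decide +kernel

theorem Balanced.exists_twistedBy {t : Fin 3 → Fin 3 → Fin 3} (ht : Balanced t)
    (hsum : ∀ y, rowCount t 0 y + rowCount t 1 y + rowCount t 2 y = 3)
    (hrow : ∀ x y, rowCount t x y ≠ 3) (hcol : ∀ y z, colCount t y z ≠ 3) :
    ∃ ε ≠ 0, TwistedBy t ε := by
  have htab : t = tableOf (t 0 0) (t 0 1) (t 0 2) (t 1 0) (t 1 1) (t 1 2) (t 2 0) (t 2 1)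
      (t 2 2) := by
    funext x z
    fin_cases x <;> fin_cases z <;> rfl
  have hrow' : ∀ x, ¬ (t x 1 = t x 0 ∧ t x 2 = t x 0) := fun x ⟨h1, h2⟩ =>
    hrow x (t x 0) (by simp [rowCount, h1, h2])
  have hcol' : ∀ z, ¬ (t 1 z = t 0 z ∧ t 2 z = t 0 z) := fun z ⟨h1, h2⟩ =>
    hcol (t 0 z) z (by simp [colCount, h1, h2])
  have hpow : ∀ y : Fin 3, 4 ^ y.val =
      (if y = 0 then 1 else 0) + 4 * (if y = 1 then 1 else 0) + 16 * if y = 2 then 1 else 0 := by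
    decide
  rw [htab] at ht ⊢
  refine exists_twistedBy_tableOf _ _ _ (hrow' 0) _ _ _ (hrow' 1) _ (hcol' 0) _ (hcol' 1) _ (hrow' 2)
    (hcol' 2) ?_ ht
  have h0 := hsum 0
  have h1 := hsum 1
  have h2 := hsum 2
  simp only [rowCount] at h0 h1 h2
  simp only [hpow]
  linarith

theorem two_le_card_add_card : ∀ Y B : Finset (Fin 3),
    (∀ e, ∃ b y, b ≠ e ∧ (y ∈ Y ∨ b ∈ B)) → (∀ e, ∃ b y, y ≠ e ∧ (y ∈ Y ∨ b ∈ B)) →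
      2 ≤ Y.card + B.card := by
  intro Y B h1 h2
  rcases Y.eq_empty_or_nonempty with rfl | ⟨y, hy⟩
  · refine le_add_left (Finset.two_le_card_of_forall_exists_ne 0 fun e => ?_)
    obtain ⟨b, y, hb, h⟩ := h1 e
    exact ⟨b, by simpa using h, hb⟩
  · rcases B.eq_empty_or_nonempty with rfl | ⟨b, hb⟩
    · refine le_add_right (Finset.two_le_card_of_forall_exists_ne 0 fun e => ?_)
      obtain ⟨b, y, hb, h⟩ := h2 e
      exact ⟨y, by simpa using h, hb⟩
    · have := Finset.card_pos.2 ⟨y, hy⟩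
      have := Finset.card_pos.2 ⟨b, hb⟩
      omega

/-- The coloring game on the cycle of length `k` with three colors, where sage `v` uses the table
`T v`, cannot be lost. -/
def TableWins (k : ℕ) (T : ZMod k → Fin 3 → Fin 3 → Fin 3) : Prop :=
  ∀ c : ZMod k → Fin 3, ∃ v, c v = T v (c (v - 1)) (c (v + 1))

theorem CycleWins.exists_tableWins {k : ℕ} {f : ZMod k → ℕ → ℕ → ℕ}
    (hf : CycleWins k (fun _ => 3) f) : ∃ T, TableWins k T := by
  refine ⟨fun v x z => Fin.ofNat 3 (f v x z), fun c => ?_⟩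
  obtain ⟨v, hv⟩ := hf (fun v => c v) fun v => (c v).2
  refine ⟨v, Fin.ext ?_⟩
  simp only [Fin.val_ofNat, ← hv]
  omega

theorem TableWins.cycleWins {k : ℕ} {T : ZMod k → Fin 3 → Fin 3 → Fin 3} (hT : TableWins k T) :
    CycleWins k (fun _ => 3) fun v x z => T v (Fin.ofNat 3 x) (Fin.ofNat 3 z) := by
  intro c hc
  obtain ⟨v, hv⟩ := hT fun v => ⟨c v, hc v⟩
  refine ⟨v, (congrArg Fin.val hv).trans ?_⟩
  congr 2 <;> exact Fin.ext (Nat.mod_eq_of_lt (hc _)).symm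

/-- The sages `s + 1, …, s + n` all guess wrong according to the tables `T`, for some coloring
of the vertices `s, …, s + n + 1` starting with `a, b` and ending with `y, z`. -/
def WrongArc {k : ℕ} (T : ZMod k → Fin 3 → Fin 3 → Fin 3) (s : ZMod k) (n : ℕ)
    (a b y z : Fin 3) : Prop :=
  WrongPath (fun i p q => T (i + s) (Fin.ofNat 3 p) (Fin.ofNat 3 q)) (fun _ => 3) n a b y z

namespace WrongArc

variable {k n : ℕ} {T : ZMod k → Fin 3 → Fin 3 → Fin 3} {s : ZMod k} {a b x y z : Fin 3}

theorem snoc (hp : WrongArc T s n a b x y) (hne : y ≠ T ((n + 1 : ℕ) + s) x z) :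
    WrongArc T s (n + 1) a b y z :=
  WrongPath.snoc hp y.2 fun h => hne (Fin.ext (by simpa using h))

theorem exists_last_ne (T : ZMod k → Fin 3 → Fin 3 → Fin 3) (s : ZMod k) (n : ℕ)
    (a z e : Fin 3) : ∃ b y, y ≠ e ∧ WrongArc T s (n + 1) a b y z := by
  obtain ⟨b, y, hne, hp⟩ := WrongPath.exists_last_ne (n := n) (H := fun _ => 3)
    (F := fun i p q => T (i + s) (Fin.ofNat 3 p) (Fin.ofNat 3 q)) (fun _ _ => rfl) a z e
  exact ⟨⟨b, hp.first_lt⟩, ⟨y, hp.last_lt⟩, fun h => hne (congrArg Fin.val h), hp⟩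

theorem exists_first_ne (T : ZMod k → Fin 3 → Fin 3 → Fin 3) (s : ZMod k) (n : ℕ)
    (a z e : Fin 3) : ∃ b y, b ≠ e ∧ WrongArc T s (n + 1) a b y z := by
  obtain ⟨b, y, hne, hp⟩ := WrongPath.exists_first_ne (n := n) (H := fun _ => 3)
    (F := fun i p q => T (i + s) (Fin.ofNat 3 p) (Fin.ofNat 3 q)) (fun _ _ => rfl) a z e
  exact ⟨⟨b, hp.first_lt⟩, ⟨y, hp.last_lt⟩, fun h => hne (congrArg Fin.val h), hp⟩

theorem exists_ends_ne (T : ZMod k → Fin 3 → Fin 3 → Fin 3) (s : ZMod k) (n : ℕ)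
    (a z : Fin 3) (e e' : Fin 3 × Fin 3) :
    ∃ b y, (b, y) ≠ e ∧ (b, y) ≠ e' ∧ WrongArc T s (n + 2) a b y z := by
  obtain ⟨b, y, hne, hne', hp⟩ := WrongPath.exists_ends_ne (n := n) (H := fun _ => 3)
    (F := fun i p q => T (i + s) (Fin.ofNat 3 p) (Fin.ofNat 3 q)) (fun _ _ => rfl) a z
    (e.1, e.2) (e'.1, e'.2)
  refine ⟨⟨b, hp.first_lt⟩, ⟨y, hp.last_lt⟩, ?_, ?_, hp⟩
  · rintro rfl
    exact hne rfl
  · rintro rfl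
    exact hne' rfl

end WrongArc

namespace TableWins

variable {n : ℕ} {T : ZMod (n + 5) → Fin 3 → Fin 3 → Fin 3} {a b o p q y z : Fin 3}

theorem eq_of_wrongArc (hT : TableWins (n + 5) T) {v : ZMod (n + 5)}
    (hp : WrongArc T v (n + 4) a b y a) : T v y b = a := by
  have := (hT.cycleWins.rotate v).eq_of_wrongPath (H := fun _ => 3) (fun _ _ => le_rfl) a.2 hp
  exact Fin.ext (by simpa using this)

theorem eq_or_eq_of_wrongArc (hT : TableWins (n + 5) T) {v : ZMod (n + 5)}
    (hp : WrongArc T (v + 1) (n + 3) q b y p) : T v y q = p ∨ T (v + 1) p b = q := by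
  refine or_iff_not_imp_left.2 fun hne => hT.eq_of_wrongArc (hp.snoc ?_)
  have : ((n + 3 + 1 : ℕ) : ZMod (n + 5)) + (v + 1) = v := by
    have := ZMod.natCast_self (n + 5)
    push_cast at this ⊢
    linear_combination this
  rwa [this, ne_comm]

theorem eq_or_eq_of_wrongArc_of_ne (hT : TableWins (n + 5) T) {v : ZMod (n + 5)}
    (hp : WrongArc T (v + 1) (n + 2) q b y o) (hne : T v o q ≠ p) :
    T (v - 1) y p = o ∨ T (v + 1) p b = q := by
  refine or_iff_not_imp_left.2 fun hne' =>
    (hT.eq_or_eq_of_wrongArc (hp.snoc ?_)).resolve_left hne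
  have : ((n + 2 + 1 : ℕ) : ZMod (n + 5)) + (v + 1) = v - 1 := by
    have := ZMod.natCast_self (n + 5)
    push_cast at this ⊢
    linear_combination this
  rwa [this, ne_comm]

theorem sum_rowCount_eq (hT : TableWins (n + 5) T) (v : ZMod (n + 5)) (a : Fin 3) :
    rowCount (T v) 0 a + rowCount (T v) 1 a + rowCount (T v) 2 a = 3 := by
  have hle : ∀ a, 3 ≤ rowCount (T v) 0 a + rowCount (T v) 1 a + rowCount (T v) 2 a := by
    intro a
    have hcard : rowCount (T v) 0 a + rowCount (T v) 1 a + rowCount (T v) 2 a =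
        (Finset.univ.filter fun e : Fin 3 × Fin 3 => T v e.2 e.1 = a).card := by
      rw [Finset.card_filter, Fintype.sum_prod_type_right, Fin.sum_univ_three]
      simp only [Fin.sum_univ_three]
      rfl
    rw [hcard]
    refine Finset.three_le_card_of_forall_exists_ne (0, 0) fun e e' => ?_
    obtain ⟨b, y, h1, h2, hp⟩ := WrongArc.exists_ends_ne T v (n + 2) a a e e'
    exact ⟨(b, y), by simpa using hT.eq_of_wrongArc hp, h1, h2⟩
  have h0 := hle 0
  have h1 := hle 1
  have h2 := hle 2
  have h3 := sum_rowCount (T v) 0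
  have h4 := sum_rowCount (T v) 1
  have h5 := sum_rowCount (T v) 2
  obtain rfl | rfl | rfl : a = 0 ∨ a = 1 ∨ a = 2 := by decide +revert
  all_goals omega

theorem sum_colCount_eq (hT : TableWins (n + 5) T) (v : ZMod (n + 5)) (a : Fin 3) :
    colCount (T v) a 0 + colCount (T v) a 1 + colCount (T v) a 2 = 3 := by
  refine Eq.trans ?_ (hT.sum_rowCount_eq v a)
  simp only [rowCount, colCount]
  omega

theorem rowCount_add_colCount (hT : TableWins (n + 5) T) (v : ZMod (n + 5)) (p q : Fin 3) :
    rowCount (T (v + 1)) p q + colCount (T v) p q = 2 := by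
  have hle : ∀ q, 2 ≤ rowCount (T (v + 1)) p q + colCount (T v) p q := by
    intro q
    rw [add_comm, rowCount_eq_card, colCount_eq_card]
    refine two_le_card_add_card _ _ (fun e => ?_) fun e => ?_
    · obtain ⟨b, y, hne, hp⟩ := WrongArc.exists_first_ne T (v + 1) (n + 2) q p e
      exact ⟨b, y, hne, by simpa using hT.eq_or_eq_of_wrongArc hp⟩
    · obtain ⟨b, y, hne, hp⟩ := WrongArc.exists_last_ne T (v + 1) (n + 2) q p e
      exact ⟨b, y, hne, by simpa using hT.eq_or_eq_of_wrongArc hp⟩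
  have h0 := hle 0
  have h1 := hle 1
  have h2 := hle 2
  have h3 := sum_rowCount (T (v + 1)) p
  have h4 := hT.sum_colCount_eq v p
  obtain rfl | rfl | rfl : q = 0 ∨ q = 1 ∨ q = 2 := by decide +revert
  all_goals omega

theorem colCount_add_rowCount (hT : TableWins (n + 5) T) (v : ZMod (n + 5)) (o p : Fin 3) :
    colCount (T (v - 1)) o p + rowCount (T v) o p = 2 := by
  rw [add_comm, ← hT.rowCount_add_colCount (v - 1), sub_add_cancel]

theorem rowCount_le_two (hT : TableWins (n + 5) T) (v : ZMod (n + 5)) (x y : Fin 3) :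
    rowCount (T v) x y ≤ 2 := by
  have := hT.colCount_add_rowCount v x y
  omega

theorem colCount_le_two (hT : TableWins (n + 5) T) (v : ZMod (n + 5)) (x y : Fin 3) :
    colCount (T v) x y ≤ 2 := by
  have := hT.rowCount_add_colCount v x y
  omega

theorem colCount_eq_zero (hT : TableWins (n + 5) T) {v : ZMod (n + 5)} (hne : T v o q ≠ p)
    (hrow : rowCount (T v) o p = 2) : colCount (T v) p q = 0 := by
  have h1 := hT.rowCount_add_colCount v p q
  have h2 := hT.colCount_add_rowCount v o p
  have h3 : 2 ≤ rowCount (T (v + 1)) p q := by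
    rw [rowCount_eq_card]
    refine Finset.two_le_card_of_forall_exists_ne 0 fun e => ?_
    obtain ⟨b, y, hbe, hp⟩ := WrongArc.exists_first_ne T (v + 1) (n + 1) q o e
    refine ⟨b, ?_, hbe⟩
    have := hT.eq_or_eq_of_wrongArc_of_ne hp hne
    have h4 : T (v - 1) y p ≠ o := fun h => by
      have := colCount_ne_zero (T (v - 1)) y p
      rw [h] at this
      omega
    simpa [h4] using this
  omega

theorem rowCount_eq_zero (hT : TableWins (n + 5) T) {v : ZMod (n + 5)} (hne : T v o q ≠ p)
    (hcol : colCount (T v) p q = 2) : rowCount (T v) o p = 0 := by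
  by_contra h
  have h1 := hT.rowCount_add_colCount v p q
  have h2 := hT.colCount_add_rowCount v o p
  have h3 : 2 ≤ colCount (T (v - 1)) o p := by
    rw [colCount_eq_card]
    refine Finset.two_le_card_of_forall_exists_ne 0 fun e => ?_
    obtain ⟨b, y, hye, hp⟩ := WrongArc.exists_last_ne T (v + 1) (n + 1) q o e
    refine ⟨y, ?_, hye⟩
    have := hT.eq_or_eq_of_wrongArc_of_ne hp hne
    have h4 : T (v + 1) p b ≠ q := fun h => by
      have := rowCount_ne_zero (T (v + 1)) p b
      rw [h] at this
      omega
    simpa [h4] using this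
  omega

theorem exists_ne_one (hT : TableWins (n + 5) T) (v : ZMod (n + 5)) (o q : Fin 3) :
    (∃ p, rowCount (T v) o p ≠ 1) ∨ ∃ p, colCount (T v) p q ≠ 1 := by
  by_contra! hcon
  obtain ⟨hrow, hcol⟩ := hcon
  obtain ⟨p, p', hpp, hp, hp'⟩ : ∃ p p', p ≠ p' ∧ T v o q ≠ p ∧ T v o q ≠ p' := by
    generalize T v o q = r
    decide +revert
  have hY : ∀ p, ∃ y, ∀ x, T (v - 1) x p = o ↔ x = y := by
    intro p
    have := hT.colCount_add_rowCount v o p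
    rw [hrow, colCount_eq_card] at this
    obtain ⟨y, hy⟩ := Finset.card_eq_one.1 (Nat.succ_injective this)
    exact ⟨y, fun x => by simpa using Finset.ext_iff.1 hy x⟩
  have hB : ∀ p, ∃ b, ∀ z, T (v + 1) p z = q ↔ z = b := by
    intro p
    have := hT.rowCount_add_colCount v p q
    rw [hcol, rowCount_eq_card] at this
    obtain ⟨y, hy⟩ := Finset.card_eq_one.1 (Nat.succ_injective this)
    exact ⟨y, fun x => by simpa using Finset.ext_iff.1 hy x⟩
  choose Y hY using hY
  choose B hB using hB
  have hYne : Y p ≠ Y p' := by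
    intro h
    have h1 := (hY p _).2 rfl
    have h2 := (hY p' _).2 h
    have h3 : 2 ≤ rowCount (T (v - 1)) (Y p) o := by
      rw [rowCount_eq_card]
      exact Finset.one_lt_card.2 ⟨p, by simpa using h1, p', by simpa using h2, hpp⟩
    have h4 : T (v - 1) (Y p) (T v o q) ≠ o := by
      intro h4
      have h5 : 2 < rowCount (T (v - 1)) (Y p) o := by
        rw [rowCount_eq_card]
        exact Finset.two_lt_card.2 ⟨p, by simpa using h1, p', by simpa using h2, T v o q,
          by simpa using h4, hpp, hp.symm, hp'.symm⟩
      exact h5.not_ge (hT.rowCount_le_two _ _ _)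
    have h5 := hT.colCount_eq_zero h4 (le_antisymm (hT.rowCount_le_two _ _ _) h3)
    have := hT.colCount_add_rowCount v o (T v o q)
    rw [h5, hrow] at this
    omega
  have hBne : B p ≠ B p' := by
    intro h
    have h1 := (hB p _).2 rfl
    have h2 := (hB p' _).2 h
    have h3 : 2 ≤ colCount (T (v + 1)) q (B p) := by
      rw [colCount_eq_card]
      exact Finset.one_lt_card.2 ⟨p, by simpa using h1, p', by simpa using h2, hpp⟩
    have h4 : T (v + 1) (T v o q) (B p) ≠ q := by
      intro h4
      have h5 : 2 < colCount (T (v + 1)) q (B p) := by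
        rw [colCount_eq_card]
        exact Finset.two_lt_card.2 ⟨p, by simpa using h1, p', by simpa using h2, T v o q,
          by simpa using h4, hpp, hp.symm, hp'.symm⟩
      exact h5.not_ge (hT.colCount_le_two _ _ _)
    have h5 := hT.rowCount_eq_zero h4 (le_antisymm (hT.colCount_le_two _ _ _) h3)
    have := hT.rowCount_add_colCount v (T v o q) q
    rw [h5, hcol] at this
    omega
  obtain ⟨b, y, h1, h2, hp0⟩ := WrongArc.exists_ends_ne T (v + 1) n q o (B p', Y p) (B p, Y p')
  have h3 := hT.eq_or_eq_of_wrongArc_of_ne hp0 hp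
  have h4 := hT.eq_or_eq_of_wrongArc_of_ne hp0 hp'
  rw [hY, hB] at h3 h4
  rcases h3 with rfl | rfl <;> rcases h4 with h4 | h4
  · exact hYne h4
  · exact h1 (by rw [h4])
  · exact h2 (by rw [h4])
  · exact hBne h4

theorem balanced (hT : TableWins (n + 5) T) (v : ZMod (n + 5)) : Balanced (T v) :=
  ⟨fun _ _ _ hne => ⟨hT.colCount_eq_zero hne, hT.rowCount_eq_zero hne⟩, hT.exists_ne_one v⟩

theorem exists_twistedBy (hT : TableWins (n + 5) T) (v : ZMod (n + 5)) :
    ∃ ε ≠ 0, TwistedBy (T v) ε :=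
  (hT.balanced v).exists_twistedBy (hT.sum_rowCount_eq v)
    (fun x y => ((hT.rowCount_le_two v x y).trans_lt (by decide)).ne)
    fun x y => ((hT.colCount_le_two v x y).trans_lt (by decide)).ne

end TableWins

theorem eq_or_eq_add_or_eq_sub : ∀ {ε : Fin 3}, ε ≠ 0 → ∀ x y, y = x ∨ y = x + ε ∨ y = x - ε := by
  decide

theorem apply_add_apply_add_apply_sub {ε : Fin 3} (hε : ε ≠ 0) (g : Fin 3 → ℕ) (y : Fin 3) :
    g y + g (y + ε) + g (y - ε) = g 0 + g 1 + g 2 := by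
  have huniv : (Finset.univ : Finset (Fin 3)) = {y, y + ε, y - ε} := by decide +revert
  rw [← Fin.sum_univ_three, huniv, Finset.sum_insert (by decide +revert),
    Finset.sum_pair (by decide +revert), add_assoc]

theorem TwistedBy.exists_rowCount_eq {t : Fin 3 → Fin 3 → Fin 3} {ε : Fin 3} (ht : TwistedBy t ε)
    (hε : ε ≠ 0) (x : Fin 3) :
    ∃ y, rowCount t x y = 2 ∧ rowCount t x (y + ε) = 0 ∧ rowCount t x (y - ε) = 1 := by
  obtain ⟨y, h1, h2⟩ := ht.1 x
  have := sum_rowCount t x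
  have := apply_add_apply_add_apply_sub hε (rowCount t x) y
  exact ⟨y, h1, h2, by omega⟩

theorem TwistedBy.exists_colCount_eq {t : Fin 3 → Fin 3 → Fin 3} {ε : Fin 3} (ht : TwistedBy t ε)
    (hε : ε ≠ 0) (z : Fin 3) :
    ∃ y, colCount t y z = 2 ∧ colCount t (y + ε) z = 0 ∧ colCount t (y - ε) z = 1 := by
  obtain ⟨y, h1, h2⟩ := ht.2.1 z
  have := sum_colCount t z
  have := apply_add_apply_add_apply_sub hε (fun y => colCount t y z) y
  exact ⟨y, h1, h2, by omega⟩

open scoped Fin.CommRing in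
theorem not_tableWins {n : ℕ} (hn : ¬ 3 ∣ n + 5) (T : ZMod (n + 5) → Fin 3 → Fin 3 → Fin 3) :
    ¬ TableWins (n + 5) T := by
  intro hT
  choose ε hε htw using hT.exists_twistedBy
  choose M hM2 hM0 hM1 using fun v x => (htw v).exists_rowCount_eq (hε v) x
  choose N hN2 hN0 hN1 using fun v z => (htw v).exists_colCount_eq (hε v) z
  have hMN : ∀ v q δ, M (v + 1) (N v q + δ * ε v) = q + (δ - 1) * ε (v + 1) := by
    intro v q δ
    have h2 := hT.rowCount_add_colCount v (N v q) q
    have h0 := hT.rowCount_add_colCount v (N v q + ε v) q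
    have h1 := hT.rowCount_add_colCount v (N v q - ε v) q
    rw [hN2] at h2
    rw [hN0] at h0
    rw [hN1] at h1
    obtain rfl | rfl | rfl : δ = 0 ∨ δ = 1 ∨ δ = -1 := by decide +revert
    · simp only [zero_mul, add_zero]
      have e0 := hM0 (v + 1) (N v q)
      have e1 := hM1 (v + 1) (N v q)
      have e2 := hM2 (v + 1) (N v q)
      rcases eq_or_eq_add_or_eq_sub (hε (v + 1)) (M (v + 1) (N v q)) q with h | h | h
      · rw [← h] at e2
        omega
      · linear_combination -h
      · rw [← h] at e1
        omega
    · simp only [one_mul, sub_self, zero_mul, add_zero]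
      have e0 := hM0 (v + 1) (N v q + ε v)
      have e1 := hM1 (v + 1) (N v q + ε v)
      rcases eq_or_eq_add_or_eq_sub (hε (v + 1)) (M (v + 1) (N v q + ε v)) q with h | h | h
      · exact h.symm
      · rw [← h] at e0
        omega
      · rw [← h] at e1
        omega
    · rw [neg_one_mul, ← sub_eq_add_neg]
      have e0 := hM0 (v + 1) (N v q - ε v)
      have e2 := hM2 (v + 1) (N v q - ε v)
      rcases eq_or_eq_add_or_eq_sub (hε (v + 1)) (M (v + 1) (N v q - ε v)) q with h | h | h
      · rw [← h] at e2
        omega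
      · rw [← h] at e0
        omega
      · have h3 : (3 : Fin 3) = 0 := rfl
        linear_combination -h + h3 * ε (v + 1)
  have hN : ∀ v, Function.Surjective (N v) := by
    intro v
    refine Finite.surjective_of_injective fun q q' h => ?_
    have h1 := hMN v q 1
    have h2 := hMN v q' 1
    rw [h] at h1
    simpa using h1.symm.trans h2
  have hM : ∀ v x δ, M (v + 1) (x + δ * ε v) = M (v + 1) x + δ * ε (v + 1) := by
    intro v x δ
    obtain ⟨q, rfl⟩ := hN v x
    have h1 := hMN v q 0
    rw [zero_mul, add_zero] at h1
    rw [hMN, h1]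
    ring
  let B : ℕ → Fin 3 := fun i => i.rec 0 fun i b => M ((i + 1 : ℕ) : ZMod (n + 5)) b
  have hB : ∀ i : ℕ, B (i + 1) = M ((i + 1 : ℕ) : ZMod (n + 5)) (B i) := fun i => rfl
  obtain ⟨δ, hδ⟩ : ∃ δ, B (n + 5) + ((n + 5 : ℕ) : Fin 3) * δ * ε 0 = 0 := by
    have h1 : ((n + 5 : ℕ) : Fin 3) ≠ 0 := by
      rwa [Ne, Fin.natCast_eq_zero]
    have h2 := hε 0
    revert h1 h2
    generalize ((n + 5 : ℕ) : Fin 3) = κ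
    generalize ε 0 = e
    generalize B (n + 5) = b
    decide +revert
  let A : ℕ → Fin 3 := fun i => B i + i * δ * ε i
  have hA : ∀ i : ℕ, A (i + 1) =
      M ((i + 1 : ℕ) : ZMod (n + 5)) (A i) + δ * ε ((i + 1 : ℕ) : ZMod (n + 5)) := by
    intro i
    simp only [A, hB]
    push_cast
    rw [hM]
    ring
  have hA0 : A (n + 5) = A 0 := by
    simp only [A, ZMod.natCast_self, hδ]
    simp [B]
  have hc : ∀ v : ZMod (n + 5), A v.val = M v (A (v - 1).val) + δ * ε v := by
    intro v
    obtain ⟨i, hi, hiv⟩ : ∃ i < n + 5, ((i : ℕ) : ZMod (n + 5)) = v - 1 :=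
      ⟨(v - 1).val, (v - 1).val_lt, ZMod.natCast_zmod_val _⟩
    have hv : v = (i + 1 : ℕ) := by
      push_cast
      rw [hiv, sub_add_cancel]
    rw [← hiv, ZMod.val_cast_of_lt hi, hv, ← hA]
    rcases Nat.lt_or_ge (i + 1) (n + 5) with h1 | h1
    · rw [ZMod.val_cast_of_lt h1]
    · obtain rfl : i = n + 4 := by omega
      rw [hA0, ZMod.natCast_self, ZMod.val_zero]
  obtain ⟨v, hv⟩ := hT fun v => A v.val
  have ha := hc v
  have hz := hc (v + 1)
  rw [add_sub_cancel_right] at hz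
  generalize A v.val = a at *
  generalize A (v - 1).val = x at *
  generalize A (v + 1).val = z at *
  have hsum := hT.rowCount_add_colCount v a z
  have h1 := rowCount_ne_zero (T v) x z
  have h2 := colCount_ne_zero (T v) x z
  have h3 := (htw v).2.2 x z
  simp only [← hv] at h1 h2 h3
  obtain rfl | rfl | rfl : δ = 0 ∨ δ = 1 ∨ δ = -1 := by clear * -; decide +revert
  · rw [zero_mul, add_zero] at hz
    rw [hz, hM2] at hsum
    rw [hz] at h2
    omega
  · rw [one_mul] at ha
    rw [ha, hM0] at h1
    exact h1 rfl
  · rw [neg_one_mul, ← sub_eq_add_neg] at ha hz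
    have h4 : rowCount (T v) x a = 1 := by rw [ha, hM1]
    have h5 : rowCount (T (v + 1)) a z = 1 := by rw [hz, hM1]
    omega

theorem not_cycleWins_of_three {k : ℕ} (hk : 5 ≤ k) (hk3 : ¬ 3 ∣ k)
    (f : ZMod k → ℕ → ℕ → ℕ) : ¬ CycleWins k (fun _ => 3) f := by
  intro hf
  obtain ⟨n, rfl⟩ := Nat.exists_eq_add_of_le' hk
  obtain ⟨T, hT⟩ := hf.exists_tableWins
  exact not_tableWins hk3 T hT

theorem CycleWins.lowHatnessCondition {k : ℕ} (hk : 3 ≤ k) {h : ZMod k → ℕ}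
    (hh : ∀ v, 2 ≤ h v ∧ h v ≤ 4) {f : ZMod k → ℕ → ℕ → ℕ} (hf : CycleWins k h f) :
    LowHatnessCondition k h := by
  by_contra hcond
  simp only [LowHatnessCondition, not_or, not_and, not_exists] at hcond
  obtain ⟨hthree, hdvd, htwo, hmid, hright, hleft⟩ := hcond
  by_cases hex : ∃ v, h v = 2
  · obtain ⟨v, hv⟩ := hex
    have hk4 : 4 ≤ k := by
      have hk3 : k ≠ 3 := fun hk3 => hthree hk3 v hv
      omega
    obtain ⟨n, rfl⟩ := Nat.exists_eq_add_of_le' hk4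
    have hge : ∀ w ≠ v, 3 ≤ h w := by
      intro w hw
      have := htwo w v hw
      have := hh w
      omega
    have hcast : ∀ m : ℕ, m ≠ 0 → m < n + 4 → (m : ZMod (n + 4)) ≠ 0 := by
      intro m hm hlt h0
      exact hm (Nat.eq_zero_of_dvd_of_lt ((ZMod.natCast_eq_zero_iff _ _).1 h0) hlt)
    have h1 : (1 : ZMod (n + 4)) ≠ 0 := by exact_mod_cast hcast 1 (by omega) (by omega)
    have h2 : (2 : ZMod (n + 4)) ≠ 0 := by exact_mod_cast hcast 2 (by omega) (by omega)
    have hm1 := hge (v - 1) (by simpa using h1)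
    have hm2 := hge (v - 2) (by simpa using h2)
    have hp1 := hge (v + 1) (by simpa using h1)
    have hp2 := hge (v + 2) (by simpa using h2)
    have hlm1 := hh (v - 1)
    have hlm2 := hh (v - 2)
    have hlp1 := hh (v + 1)
    have hlp2 := hh (v + 2)
    have hc1 := hmid v
    have hc2 := hright v hv
    have hc3 := hleft (v - 2)
    rw [show v - 2 + 1 = v - 1 by ring, sub_add_cancel] at hc3
    rcases (show h (v - 1) = 4 ∧ h (v + 1) = 4 ∨ h (v - 1) = 3 ∧ h (v - 2) = 4 ∧ h (v + 1) = 4 ∨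
        h (v + 1) = 3 ∧ h (v + 2) = 4 ∧ h (v - 1) = 4 by omega) with h3 | h3 | h3
    · refine not_cycleWins_of_four_two_four ?_ ?_ ?_ ?_ _ (hf.rotate (v - 1))
      · rw [zero_add, h3.1]
      · rw [add_sub_cancel, hv]
      · rw [show 2 + (v - 1) = v + 1 by ring, h3.2]
      · exact fun w hw => hge _ fun h => hw (by linear_combination h)
    · refine not_cycleWins_of_three_two_four ?_ ?_ ?_ ?_ ?_ _ (hf.rotate (v - 1))
      · rw [zero_add, h3.1]
      · rw [add_sub_cancel, hv]
      · rw [show 2 + (v - 1) = v + 1 by ring, h3.2.2]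
      · rw [show -1 + (v - 1) = v - 2 by ring, h3.2.1]
      · exact fun w hw => hge _ fun h => hw (by linear_combination h)
    · refine not_cycleWins_of_three_two_four ?_ ?_ ?_ ?_ ?_ _ (hf.rotate (v + 1)).reflect
      · rw [neg_zero, zero_add, h3.1]
      · rw [show -1 + (v + 1) = v by ring, hv]
      · rw [show -2 + (v + 1) = v - 1 by ring, h3.2.2]
      · rw [show - -1 + (v + 1) = v + 2 by ring, h3.2.1]
      · exact fun w hw => hge _ fun h => hw (by linear_combination -h)
  · have hge : ∀ v, 3 ≤ h v := by
      intro v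
      have h1 : h v ≠ 2 := fun hv => hex ⟨v, hv⟩
      have h2 := hh v
      omega
    by_cases hex4 : ∃ v, h v = 4
    · obtain ⟨v, hv⟩ := hex4
      obtain ⟨n, rfl⟩ := Nat.exists_eq_add_of_le' hk
      exact not_cycleWins_of_four (by rw [zero_add, hv]) (fun w => hge _) _ (hf.rotate v)
    · have hle : ∀ v, h v ≤ 3 := by
        intro v
        have h1 : h v ≠ 4 := fun hv => hex4 ⟨v, hv⟩
        have h2 := hh v
        omega
      have hk' := fun h => hdvd h hle
      refine not_cycleWins_of_three ?_ (fun h => hk' (Or.inr h)) f (hf.mono hge)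
      have h3 : k ≠ 3 := fun h => hk' (Or.inr (h ▸ dvd_rfl))
      have h4 : k ≠ 4 := fun h => hk' (Or.inl h)
      omega

end HatGame


/-- Classification of winnable Latvian cycles with all hatnesses between 2 and 4. -/
theorem latvian_cycle_low_hatness_winnable_iff (k : ℕ) (hk : 3 ≤ k)
    (h : ZMod k → ℕ) (hh : ∀ v, 2 ≤ h v ∧ h v ≤ 4) :
    HatGame.Winnable (fun i j : ZMod k => j = i + 1 ∨ j = i - 1) (fun _ => 1) h ↔
      ((k = 3 ∧ ∃ v : ZMod k, h v = 2) ∨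
       ((k = 4 ∨ 3 ∣ k) ∧ ∀ v : ZMod k, h v ≤ 3) ∨
       (∃ v w : ZMod k, v ≠ w ∧ h v = 2 ∧ h w = 2) ∨
       (∃ i : ZMod k, h (i - 1) = 3 ∧ h i = 2 ∧ h (i + 1) = 3) ∨
       (∃ i : ZMod k, h i = 2 ∧ h (i + 1) = 3 ∧ h (i + 2) = 3) ∨
       (∃ i : ZMod k, h i = 3 ∧ h (i + 1) = 3 ∧ h (i + 2) = 2)) := by
  rw [HatGame.winnable_iff_exists_cycleWins k h fun v => zero_lt_two.trans_le (hh v).1]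
  exact ⟨fun ⟨_, hf⟩ => hf.lowHatnessCondition hk hh,
    fun hcond => HatGame.LowHatnessCondition.exists_cycleWins hk (fun v => (hh v).2) hcond⟩
end

section
/- Let (D, g, h) be a winnable Czech hat game and Y a set of vertices containing a vertex b with h b = 2 (hence g b = 1). Form the game on Option V by attaching a new vertex x universal to Y with hatness h x = 3 and guessness g x = 1, replacing the hatness h v by h v + g v for every v ∈ Y other than b, and leaving all other hatnesses and all guessnesses unchanged. The resulting Czech game is winnable. -/
/-- Colors below `m` are kept and all others are sent to `0`. -/
def Fin.truncate {n : ℕ} (m : ℕ) (hm : 0 < m) (i : Fin n) : Fin m :=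
  if hi : i.val < m then ⟨i.val, hi⟩ else ⟨0, hm⟩

theorem Fin.val_truncate {n m : ℕ} (hm : 0 < m) {i : Fin n} (hi : i.val < m) :
    (i.truncate m hm).val = i.val := by
  simp [Fin.truncate, hi]

theorem Fin.card_filter_le_val {m k n : ℕ} (hn : n = m + k) :
    (Finset.univ.filter fun i : Fin n => m ≤ i.val).card = k := by
  subst hn
  have e : (Finset.univ.filter fun i : Fin (m + k) => m ≤ i.val) =
      Finset.univ.map (Fin.natAddEmb m) := by
    ext i
    simp only [Finset.mem_filter, Finset.mem_univ, true_and, Finset.mem_map]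
    constructor
    · intro hi
      exact ⟨⟨i.val - m, by omega⟩, by ext; simp; omega⟩
    · rintro ⟨j, rfl⟩
      simp
  rw [e]
  simp

theorem Fin.card_filter_val_eq {n k : ℕ} (hk : k < n) :
    (Finset.univ.filter fun i : Fin n => i.val = k).card = 1 := by
  rw [Finset.card_eq_one]
  exact ⟨⟨k, hk⟩, by ext i; simp [Fin.ext_iff]⟩

/-- Attaching a vertex of hatness 3 universal to a set `Y` containing a
hatness-2 vertex `b`, increasing `h v` by `g v` for every `v ∈ Y` other
than `b`, preserves winnability. -/
theorem czech_attach_hatness_three {V : Type*} [Fintype V] [DecidableEq V]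
    (D : V → V → Prop) (hloop : ∀ v, ¬ D v v)
    (g h : V → ℕ) (hgh : ∀ v, 0 < g v ∧ g v < h v)
    (Y : Set V) [DecidablePred (· ∈ Y)]
    (b : V) (hb : b ∈ Y) (hhb : h b = 2) (hgb : g b = 1)
    (hw : HatGame.Winnable D g h) :
    HatGame.Winnable
      (fun a c : Option V =>
        match a, c with
        | none, some v => v ∈ Y
        | some v, none => v ∈ Y
        | some u, some v => D u v
        | none, none => False)
      (fun a => a.elim 1 g)
      (fun a => a.elim 3 (fun v => if v ∈ Y ∧ v ≠ b then h v + g v else h v)) := by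
  classical
  obtain ⟨F, hF, hcard, hwin⟩ := hw
  have hpos : ∀ v, 0 < h v := fun v => (hgh v).1.trans (hgh v).2
  let H : V → ℕ := fun v => if v ∈ Y ∧ v ≠ b then h v + g v else h v
  have hle : ∀ v, h v ≤ H v := fun v => by dsimp only [H]; split_ifs <;> omega
  have hHb : H b = 2 := by simp [H, hhb]
  have hHY : ∀ v, v ∈ Y → v ≠ b → H v = h v + g v := fun v h1 h2 => by simp [H, h1, h2]
  have hH : ∀ v, ¬ (v ∈ Y ∧ v ≠ b) → H v = h v := fun v h1 => by simp only [H, if_neg h1]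
  let K : Option V → ℕ := fun a => a.elim 3 H
  change HatGame.Winnable _ _ K
  let T : (∀ a, Fin (K a)) → ∀ v, Fin (h v) := fun c v =>
    Fin.truncate (n := H v) (h v) (hpos v) (c (some v))
  let x : (∀ a, Fin (K a)) → ℕ := fun c => (c none).val
  have hx : ∀ c, x c < 3 := fun c => (c none).isLt
  let y : (∀ a, Fin (K a)) → V → ℕ := fun c v => (c (some v)).val
  have hy : ∀ c v, y c v < H v := fun c v => (c (some v)).isLt
  let guessX : (∀ a, Fin (K a)) → ℕ := fun c =>
    if ∃ v ∈ Y, h v ≤ y c v then 2 else 1 - y c b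
  have hguessX : ∀ c, guessX c < 3 := fun c => by dsimp only [guessX]; split_ifs <;> omega
  let G : ∀ v, (∀ a, Fin (K a)) → Finset (Fin (H v)) := fun v c =>
    if v ∈ Y ∧ x c < 2 then
      if v = b then Finset.univ.filter fun i => i.val = x c
      else Finset.univ.filter fun i => h v ≤ i.val
    else (F v (T c)).map (Fin.castLEEmb (hle v))
  have hmem : ∀ v c, ¬ (v ∈ Y ∧ x c < 2) → y c v < h v → T c v ∈ F v (T c) →
      c (some v) ∈ G v c := by
    intro v c h1 h2 h3
    simp only [G, if_neg h1]
    exact Finset.mem_map.2 ⟨_, h3, Fin.ext (Fin.val_truncate (hpos v) h2)⟩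
  refine ⟨fun a => match a with
    | none => fun c => {(⟨guessX c, hguessX c⟩ : Fin 3)}
    | some v => G v, ?_, ?_, ?_⟩
  · rintro (_ | v) c c' hc
    · have hcY : ∀ v ∈ Y, y c v = y c' v := fun v hv => congrArg Fin.val (hc (some v) hv)
      have hex : (∃ v ∈ Y, h v ≤ y c v) ↔ ∃ v ∈ Y, h v ≤ y c' v :=
        exists_congr fun v => and_congr_right fun hv => by rw [hcY v hv]
      have hg : guessX c = guessX c' := by simp only [guessX, hex, hcY b hb]
      simp only [hg]
    · have hT : F v (T c) = F v (T c') := hF v _ _ fun u hu =>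
        congrArg (Fin.truncate (h u) (hpos u)) (hc (some u) hu)
      by_cases hv : v ∈ Y
      · have hxc : x c = x c' := congrArg Fin.val (hc none hv)
        simp only [G, hxc, hT]
        rfl
      · simp only [G, hv, false_and, if_false, hT]
        rfl
  · rintro (_ | v) c
    · exact Finset.card_singleton _
    · change (G v c).card = g v
      dsimp only [G]
      split_ifs with h1 h2
      · subst h2
        rw [hgb]
        exact Fin.card_filter_val_eq (by omega)
      · exact Fin.card_filter_le_val (hHY v h1.1 h2)
      · rw [Finset.card_map, hcard]
  · intro c
    by_cases hxg : x c = guessX c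
    · exact ⟨none, Finset.mem_singleton.2 (Fin.ext hxg)⟩
    by_cases hx2 : x c < 2
    · by_cases hxb : y c b = x c
      · refine ⟨some b, ?_⟩
        change c (some b) ∈ G b c
        simp only [G, if_pos (And.intro hb hx2), if_true]
        exact Finset.mem_filter.2 ⟨Finset.mem_univ _, hxb⟩
      · have hyb := hy c b
        by_cases hex : ∃ v ∈ Y, h v ≤ y c v
        · obtain ⟨v, hv, hlv⟩ := hex
          have hvb : v ≠ b := by rintro rfl; omega
          refine ⟨some v, ?_⟩
          change c (some v) ∈ G v c
          simp only [G, if_pos (And.intro hv hx2), if_neg hvb]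
          exact Finset.mem_filter.2 ⟨Finset.mem_univ _, hlv⟩
        · simp only [guessX, if_neg hex] at hxg
          omega
    · have hex : ¬ ∃ v ∈ Y, h v ≤ y c v := fun hex => by
        have := hx c
        simp only [guessX, if_pos hex] at hxg
        omega
      push Not at hex
      obtain ⟨v, hv⟩ := hwin (T c)
      refine ⟨some v, hmem v c (fun h' => hx2 h'.2) ?_ hv⟩
      by_cases hvY : v ∈ Y
      · exact hex v hvY
      · exact (hy c v).trans_eq (hH v fun h' => hvY h'.1)
end
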